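/- arXiv:1212.0896 — 4 statements merged into one kernel-verified Lean document; each statement's English description precedes it below -/
import Mathlib

section
/- Suppose A is directed, i.e. e_j A e_i = 0 whenever j < i, and let f = Σ_{i∈S} e_i for some subset S ⊆ {1,…,n}. If there are, up to isomorphism, only finitely many indecomposable finitely generated left A-modules, then there are, up to isomorphism, only finitely many indecomposable finitely generated left fAf-modules. -/
/-!
The functor `M ↦ fM` from `A`-modules to `fAf`-modules hits every indecomposable finitely generated
`fAf`-module `X` at an indecomposable finitely generated `A`-module; this holds for every idempotent
`f`, so the modules `f Mᵢ`, for `Mᵢ` a finite list of representatives over `A`, represent all the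
indecomposables over `fAf`.

The preimage of `X` is `induced hf X`, written `A · X`: the `A`-submodule generated by the maps
`orb x : b ↦ (f b f) • x` in the module of additive maps `A → X`, where `A` acts by right
translation. The map `x ↦ orb x` identifies `X` with `f (A · X)` (`orb_injective`,
`exists_orb_of_mem`), and generators of `X` generate `A · X` (`induced_finite`). A decomposition
`A · X = p ⊕ q` restricts to the decomposition `X = (p ∩ X) ⊕ (q ∩ X)` (`isCompl_trace`), so one of
`p`, `q` contains `X`, hence is everything (`induced_indec`).
-/

set_option linter.unusedVariables false
set_option maxHeartbeats 1000000

noncomputable section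

/-! ### The corner ring `eAe` of a ring `A` at an idempotent `e` -/

variable {A : Type} [Ring A]

/-- The corner ring `eAe`, realized as `{x : A | e * x = x ∧ x * e = x}`. -/
def Corner (e : A) (_he : e * e = e) : Type := {x : A // e * x = x ∧ x * e = x}

namespace Corner

variable {e : A} {he : e * e = e}

instance : Zero (Corner e he) := ⟨⟨0, by simp, by simp⟩⟩
instance : Add (Corner e he) :=
  ⟨fun x y => ⟨x.1 + y.1, by rw [mul_add, x.2.1, y.2.1], by rw [add_mul, x.2.2, y.2.2]⟩⟩
instance : Neg (Corner e he) :=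
  ⟨fun x => ⟨-x.1, by rw [mul_neg, x.2.1], by rw [neg_mul, x.2.2]⟩⟩
instance : Mul (Corner e he) :=
  ⟨fun x y => ⟨x.1 * y.1, by rw [← mul_assoc, x.2.1], by rw [mul_assoc, y.2.2]⟩⟩
instance : One (Corner e he) := ⟨⟨e, he, he⟩⟩

instance : AddCommGroup (Corner e he) where
  add_assoc a b c := Subtype.ext (add_assoc _ _ _)
  zero_add a := Subtype.ext (zero_add _)
  add_zero a := Subtype.ext (add_zero _)
  add_comm a b := Subtype.ext (add_comm _ _)
  neg_add_cancel a := Subtype.ext (neg_add_cancel _)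
  nsmul := nsmulRec
  zsmul := zsmulRec

instance instRing : Ring (Corner e he) :=
  { (inferInstance : AddCommGroup (Corner e he)) with
    mul := (· * ·)
    one := 1
    mul_assoc := fun a b c => Subtype.ext (mul_assoc _ _ _)
    one_mul := fun a => Subtype.ext a.2.1
    mul_one := fun a => Subtype.ext a.2.2
    left_distrib := fun a b c => Subtype.ext (left_distrib _ _ _)
    right_distrib := fun a b c => Subtype.ext (right_distrib _ _ _)
    zero_mul := fun a => Subtype.ext (zero_mul _)
    mul_zero := fun a => Subtype.ext (mul_zero _) }

section Scalars

variable {k : Type} [CommRing k] [Algebra k A]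

instance : SMul k (Corner e he) :=
  ⟨fun c x => ⟨c • x.1, by rw [mul_smul_comm, x.2.1], by rw [smul_mul_assoc, x.2.2]⟩⟩

instance instModulek : Module k (Corner e he) where
  one_smul x := Subtype.ext (one_smul k x.1)
  mul_smul c d x := Subtype.ext (mul_smul c d x.1)
  smul_zero c := Subtype.ext (smul_zero c)
  smul_add c x y := Subtype.ext (smul_add c x.1 y.1)
  add_smul c d x := Subtype.ext (add_smul c d x.1)
  zero_smul x := Subtype.ext (zero_smul k x.1)

instance instAlgebrak : Algebra k (Corner e he) :=
  Algebra.ofModule (fun c x y => Subtype.ext (smul_mul_assoc c x.1 y.1))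
    (fun c x y => Subtype.ext (mul_smul_comm c x.1 y.1))

end Scalars

end Corner

/-- For a left `A`-module `M`, the subset `eM = {m | e • m = m}`, as a module over the
corner ring `eAe`. -/
def CornerMod (e : A) (_he : e * e = e) (M : Type) [AddCommGroup M] [Module A M] : Type :=
  {m : M // e • m = m}

namespace CornerMod

variable {e : A} {he : e * e = e} {M : Type} [AddCommGroup M] [Module A M]

instance : Zero (CornerMod e he M) := ⟨⟨0, by simp⟩⟩
instance : Add (CornerMod e he M) :=
  ⟨fun x y => ⟨x.1 + y.1, by rw [smul_add, x.2, y.2]⟩⟩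
instance : Neg (CornerMod e he M) := ⟨fun x => ⟨-x.1, by rw [smul_neg, x.2]⟩⟩

instance : AddCommGroup (CornerMod e he M) where
  add_assoc a b c := Subtype.ext (add_assoc _ _ _)
  zero_add a := Subtype.ext (zero_add _)
  add_zero a := Subtype.ext (add_zero _)
  add_comm a b := Subtype.ext (add_comm _ _)
  neg_add_cancel a := Subtype.ext (neg_add_cancel _)
  nsmul := nsmulRec
  zsmul := zsmulRec

instance : SMul (Corner e he) (CornerMod e he M) :=
  ⟨fun c m => ⟨c.1 • m.1, by rw [smul_smul, c.2.1]⟩⟩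

instance instModule : Module (Corner e he) (CornerMod e he M) where
  one_smul m := Subtype.ext m.2
  mul_smul x y m := Subtype.ext (mul_smul x.1 y.1 m.1)
  smul_zero x := Subtype.ext (smul_zero x.1)
  smul_add x m m' := Subtype.ext (smul_add x.1 m.1 m'.1)
  add_smul x y m := Subtype.ext (add_smul x.1 y.1 m.1)
  zero_smul m := Subtype.ext (zero_smul A m.1)

end CornerMod

/-- The space `eAf = {x : A | e * x = x ∧ x * f = x}`, a left `eAe`-module and a right
`fAf`-module. -/
def Sandwich (e f : A) : Type := {x : A // e * x = x ∧ x * f = x}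

namespace Sandwich

variable {e f : A} {he : e * e = e} {hf : f * f = f}

instance : Zero (Sandwich e f) := ⟨⟨0, by simp, by simp⟩⟩
instance : Add (Sandwich e f) :=
  ⟨fun x y => ⟨x.1 + y.1, by rw [mul_add, x.2.1, y.2.1], by rw [add_mul, x.2.2, y.2.2]⟩⟩
instance : Neg (Sandwich e f) :=
  ⟨fun x => ⟨-x.1, by rw [mul_neg, x.2.1], by rw [neg_mul, x.2.2]⟩⟩

instance : AddCommGroup (Sandwich e f) where
  add_assoc a b c := Subtype.ext (add_assoc _ _ _)
  zero_add a := Subtype.ext (zero_add _)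
  add_zero a := Subtype.ext (add_zero _)
  add_comm a b := Subtype.ext (add_comm _ _)
  neg_add_cancel a := Subtype.ext (neg_add_cancel _)
  nsmul := nsmulRec
  zsmul := zsmulRec

/-- Left action of the corner ring `eAe` on `eAf`. -/
instance : SMul (Corner e he) (Sandwich e f) :=
  ⟨fun c x => ⟨c.1 * x.1, by rw [← mul_assoc, c.2.1], by rw [mul_assoc, x.2.2]⟩⟩

instance instModuleLeft : Module (Corner e he) (Sandwich e f) where
  one_smul x := Subtype.ext x.2.1
  mul_smul c d x := Subtype.ext (mul_assoc _ _ _)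
  smul_zero c := Subtype.ext (mul_zero _)
  smul_add c x y := Subtype.ext (mul_add _ _ _)
  add_smul c d x := Subtype.ext (add_mul _ _ _)
  zero_smul x := Subtype.ext (zero_mul _)

/-- Right action of the corner ring `fAf` on `eAf`, as a left action of the opposite ring. -/
instance : SMul (Corner f hf)ᵐᵒᵖ (Sandwich e f) :=
  ⟨fun c x => ⟨x.1 * c.unop.1, by rw [← mul_assoc, x.2.1], by rw [mul_assoc, c.unop.2.2]⟩⟩

instance instModuleRight : Module (Corner f hf)ᵐᵒᵖ (Sandwich e f) where
  one_smul x := Subtype.ext x.2.2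
  mul_smul c d x := Subtype.ext (mul_assoc _ _ _).symm
  smul_zero c := Subtype.ext (zero_mul _)
  smul_add c x y := Subtype.ext (add_mul _ _ _)
  add_smul c d x := Subtype.ext (mul_add _ _ _)
  zero_smul x := Subtype.ext (mul_zero _)

end Sandwich

/-- The element `e * a * e` of the corner ring `eAe`. -/
def cornEl {e : A} (he : e * e = e) (a : A) : Corner e he :=
  ⟨e * a * e, by conv_lhs => rw [← mul_assoc, ← mul_assoc, he], by rw [mul_assoc, he]⟩
def LIdeal (e : A) : Type := {x : A // x * e = x}
namespace LIdeal
variable {e : A}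
instance : Zero (LIdeal e) := ⟨⟨0, by simp⟩⟩
instance : Add (LIdeal e) := ⟨fun x y => ⟨x.1 + y.1, by rw [add_mul, x.2, y.2]⟩⟩
instance : Neg (LIdeal e) := ⟨fun x => ⟨-x.1, by rw [neg_mul, x.2]⟩⟩
instance : AddCommGroup (LIdeal e) where
  add_assoc a b c := Subtype.ext (add_assoc _ _ _)
  zero_add a := Subtype.ext (zero_add _)
  add_zero a := Subtype.ext (add_zero _)
  add_comm a b := Subtype.ext (add_comm _ _)
  neg_add_cancel a := Subtype.ext (neg_add_cancel _)
  nsmul := nsmulRec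
  zsmul := zsmulRec
instance : SMul A (LIdeal e) := ⟨fun a x => ⟨a * x.1, by rw [mul_assoc, x.2]⟩⟩
instance instModuleA : Module A (LIdeal e) where
  one_smul x := Subtype.ext (one_mul _)
  mul_smul a b x := Subtype.ext (mul_assoc _ _ _)
  smul_zero a := Subtype.ext (mul_zero _)
  smul_add a x y := Subtype.ext (mul_add _ _ _)
  add_smul a b x := Subtype.ext (add_mul _ _ _)
  zero_smul x := Subtype.ext (zero_mul _)
section Scalars
variable {k : Type} [CommRing k] [Algebra k A]
instance : SMul k (LIdeal e) := ⟨fun c x => ⟨c • x.1, by rw [smul_mul_assoc, x.2]⟩⟩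
instance instModulek : Module k (LIdeal e) where
  one_smul x := Subtype.ext (one_smul k x.1)
  mul_smul c d x := Subtype.ext (mul_smul c d x.1)
  smul_zero c := Subtype.ext (smul_zero c)
  smul_add c x y := Subtype.ext (smul_add c x.1 y.1)
  add_smul c d x := Subtype.ext (add_smul c d x.1)
  zero_smul x := Subtype.ext (zero_smul k x.1)
end Scalars
end LIdeal

def RIdeal (f : A) : Type := {x : A // f * x = x}
namespace RIdeal
variable {f : A}
instance : Zero (RIdeal f) := ⟨⟨0, by simp⟩⟩
instance : Add (RIdeal f) := ⟨fun x y => ⟨x.1 + y.1, by rw [mul_add, x.2, y.2]⟩⟩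
instance : Neg (RIdeal f) := ⟨fun x => ⟨-x.1, by rw [mul_neg, x.2]⟩⟩
instance : AddCommGroup (RIdeal f) where
  add_assoc a b c := Subtype.ext (add_assoc _ _ _)
  zero_add a := Subtype.ext (zero_add _)
  add_zero a := Subtype.ext (add_zero _)
  add_comm a b := Subtype.ext (add_comm _ _)
  neg_add_cancel a := Subtype.ext (neg_add_cancel _)
  nsmul := nsmulRec
  zsmul := zsmulRec
section Scalars
variable {k : Type} [CommRing k] [Algebra k A]
instance : SMul k (RIdeal f) := ⟨fun c x => ⟨c • x.1, by rw [mul_smul_comm, x.2]⟩⟩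
instance instModulek : Module k (RIdeal f) where
  one_smul x := Subtype.ext (one_smul k x.1)
  mul_smul c d x := Subtype.ext (mul_smul c d x.1)
  smul_zero c := Subtype.ext (smul_zero c)
  smul_add c x y := Subtype.ext (smul_add c x.1 y.1)
  add_smul c d x := Subtype.ext (add_smul c d x.1)
  zero_smul x := Subtype.ext (zero_smul k x.1)
end Scalars
end RIdeal

section Duals
variable (k : Type) [CommRing k] {A : Type} [Ring A] [Algebra k A]

/-- Right multiplication by `a : A` on the right ideal `fA`, as a `k`-linear map. -/
def rmulR {f : A} (a : A) : RIdeal (A := A) f →ₗ[k] RIdeal (A := A) f where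
  toFun m := ⟨m.1 * a, by rw [← mul_assoc, m.2]⟩
  map_add' x y := Subtype.ext (add_mul _ _ _)
  map_smul' c x := Subtype.ext (smul_mul_assoc _ _ _)

/-- Left multiplication by `b : A` on the left ideal `Ae`, as a `k`-linear map. -/
def lmulL {e : A} (b : A) : LIdeal (A := A) e →ₗ[k] LIdeal (A := A) e where
  toFun m := ⟨b * m.1, by rw [mul_assoc, m.2]⟩
  map_add' x y := Subtype.ext (mul_add _ _ _)
  map_smul' c x := Subtype.ext (mul_smul_comm _ _ _)

variable {f e : A}

/-- `D(fA) = Hom_k(fA, k)` is a left `A`-module via `(a • φ) m = φ (m * a)`. -/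
instance : SMul A (RIdeal (A := A) f →ₗ[k] k) := ⟨fun a φ => φ.comp (rmulR k a)⟩

instance DualRIdeal.instModuleA : Module A (RIdeal (A := A) f →ₗ[k] k) where
  one_smul φ := LinearMap.ext fun m => congrArg φ (Subtype.ext (mul_one m.1))
  mul_smul a b φ := LinearMap.ext fun m => congrArg φ (Subtype.ext (mul_assoc m.1 a b).symm)
  smul_zero a := LinearMap.ext fun m => rfl
  smul_add a φ ψ := LinearMap.ext fun m => rfl
  add_smul a b φ := LinearMap.ext fun m => by
    have h : rmulR k (f := f) (a + b) m = rmulR k a m + rmulR k b m :=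
      Subtype.ext (mul_add m.1 a b)
    show φ (rmulR k (a + b) m) = φ (rmulR k a m) + φ (rmulR k b m)
    rw [h, map_add]
  zero_smul φ := LinearMap.ext fun m => by
    have h : rmulR k (f := f) (0 : A) m = 0 := Subtype.ext (mul_zero m.1)
    show φ (rmulR k (0 : A) m) = 0
    rw [h, map_zero]

/-- `D(Ae) = Hom_k(Ae, k)` is a right `A`-module, i.e. a left `Aᵐᵒᵖ`-module, via
`(φ • a) m = φ (a * m)`. -/
instance : SMul Aᵐᵒᵖ (LIdeal (A := A) e →ₗ[k] k) := ⟨fun a φ => φ.comp (lmulL k a.unop)⟩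

instance DualLIdeal.instModuleAop : Module Aᵐᵒᵖ (LIdeal (A := A) e →ₗ[k] k) where
  one_smul φ := LinearMap.ext fun m => congrArg φ (Subtype.ext (one_mul m.1))
  mul_smul a b φ := LinearMap.ext fun m =>
    congrArg φ (Subtype.ext (mul_assoc b.unop a.unop m.1))
  smul_zero a := LinearMap.ext fun m => rfl
  smul_add a φ ψ := LinearMap.ext fun m => rfl
  add_smul a b φ := LinearMap.ext fun m => by
    have h : lmulL k (e := e) ((a + b).unop) m = lmulL k a.unop m + lmulL k b.unop m :=
      Subtype.ext (add_mul a.unop b.unop m.1)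
    show φ (lmulL k ((a + b).unop) m) = φ (lmulL k a.unop m) + φ (lmulL k b.unop m)
    rw [h, map_add]
  zero_smul φ := LinearMap.ext fun m => by
    have h : lmulL k (e := e) ((0 : Aᵐᵒᵖ).unop) m = 0 := Subtype.ext (zero_mul m.1)
    show φ (lmulL k ((0 : Aᵐᵒᵖ).unop) m) = 0
    rw [h, map_zero]

/-- Left multiplication by `a : A` on `A`, as a map of right `A`-modules. -/
def lmulOp (a : A) : A →ₗ[Aᵐᵒᵖ] A where
  toFun x := a * x
  map_add' := mul_add a
  map_smul' b x := by
    simp only [MulOpposite.smul_eq_mul_unop, RingHom.id_apply, mul_assoc]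

/-- `Hom_{Aᵒᵖ}(D(Ae), A)` is a left `A`-module via `(a • ψ) φ = a * ψ φ`. -/
instance : SMul A ((LIdeal (A := A) e →ₗ[k] k) →ₗ[Aᵐᵒᵖ] A) :=
  ⟨fun a ψ => (lmulOp a).comp ψ⟩

instance HomDualA.instModuleA : Module A ((LIdeal (A := A) e →ₗ[k] k) →ₗ[Aᵐᵒᵖ] A) where
  one_smul ψ := LinearMap.ext fun φ => one_mul _
  mul_smul a b ψ := LinearMap.ext fun φ => mul_assoc _ _ _
  smul_zero a := LinearMap.ext fun φ => mul_zero _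
  smul_add a ψ χ := LinearMap.ext fun φ => mul_add _ _ _
  add_smul a b ψ := LinearMap.ext fun φ => add_mul _ _ _
  zero_smul ψ := LinearMap.ext fun φ => zero_mul _

end Duals
/-! ### Stratification -/

section Strat

variable (A : Type) [Ring A] {n : ℕ} (e : Fin n → A)

/-- The left ideal `Ae_i`, as a submodule of the left regular module. -/
abbrev stdIdeal (i : Fin n) : Submodule A A := Submodule.span A {e i}

/-- The left submodule `Σ_{l > i} A e_l A e_i` of `A`. -/
abbrev stdTrace (i : Fin n) : Submodule A A :=
  Submodule.span A {x : A | ∃ l : Fin n, i < l ∧ ∃ b : A, x = e l * b * e i}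

/-- The standard module `Δ_i = Ae_i / (Σ_{l>i} A e_l A e_i)`. -/
abbrev StdMod (i : Fin n) :=
  ↥(stdIdeal A e i) ⧸ (Submodule.comap (stdIdeal A e i).subtype (stdTrace A e i))

/-- The submodule `Σ_{j ≥ i} A e_j (rad A) e_i` of `A`, where `rad A` is the Jacobson
radical of `A`. -/
abbrev properTrace (i : Fin n) : Submodule A A :=
  Submodule.span A {x : A | ∃ j : Fin n, i ≤ j ∧
    ∃ r ∈ Ideal.jacobson (⊥ : Ideal A), x = e j * r * e i}

/-- The proper standard module `Δ̄_i = Ae_i / (Σ_{j ≥ i} A e_j (rad A) e_i)`. -/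
abbrev PStdMod (i : Fin n) :=
  ↥(stdIdeal A e i) ⧸ (Submodule.comap (stdIdeal A e i).subtype (properTrace A e i))

/-- `M` admits a filtration `0 = M_0 ⊆ M_1 ⊆ ⋯ ⊆ M_r = M` whose successive quotients are
standard modules; i.e. `M ∈ F(Δ)`. -/
def HasStdFiltration (M : Type) [AddCommGroup M] [Module A M] : Prop :=
  ∃ (r : ℕ) (F : Fin (r + 1) → Submodule A M), Monotone F ∧ F 0 = ⊥ ∧ F (Fin.last r) = ⊤ ∧
    ∀ t : Fin r, ∃ i : Fin n,
      Nonempty ((↥(F t.succ) ⧸ (Submodule.comap (F t.succ).subtype (F t.castSucc)))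
        ≃ₗ[A] StdMod A e i)

/-- `M` admits a filtration `0 = M_0 ⊆ M_1 ⊆ ⋯ ⊆ M_r = M` whose successive quotients are
direct summands of standard modules. -/
def HasStdSummandFiltration (M : Type) [AddCommGroup M] [Module A M] : Prop :=
  ∃ (r : ℕ) (F : Fin (r + 1) → Submodule A M), Monotone F ∧ F 0 = ⊥ ∧ F (Fin.last r) = ⊤ ∧
    ∀ t : Fin r, ∃ (i : Fin n) (p q : Submodule A (StdMod A e i)), IsCompl p q ∧
      Nonempty ((↥(F t.succ) ⧸ (Submodule.comap (F t.succ).subtype (F t.castSucc)))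
        ≃ₗ[A] ↥p)

/-- The algebra `A` is directed with respect to the index order of the idempotents `e_i`:
`e_j A e_i = 0` whenever `j < i`. -/
def IsDirectedAlgebra : Prop := ∀ i j : Fin n, j < i → ∀ a : A, e j * a * e i = 0

end Strat

/-- `ProjDimLE A d M` : the left `A`-module `M` has projective dimension at most `d`,
i.e. admits a projective resolution of length at most `d`. -/
def ProjDimLE (A : Type) [Ring A] : ℕ → (M : Type) → [AddCommGroup M] → [Module A M] → Prop
  | 0, M, _, _ => Module.Projective A M
  | (d + 1), M, _, _ => ∃ (P : Type) (_ : AddCommGroup P) (_ : Module A P)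
      (f : P →ₗ[A] M), Module.Projective A P ∧ Function.Surjective f ∧
        ProjDimLE A d ↥(LinearMap.ker f)

/-- A nonzero module which is not the internal direct sum of two nonzero submodules. -/
def IsIndecModule (A : Type) [Ring A] (M : Type) [AddCommGroup M] [Module A M] : Prop :=
  Nontrivial M ∧ ∀ p q : Submodule A M, IsCompl p q → p = ⊥ ∨ q = ⊥

end

/-! ### The `A`-module generated by an `fAf`-module -/

/-- Additive maps `A → X`, as a type on which `A` acts by right translation of the argument,
`(a • φ) b = φ (b * a)`. -/
def TransHom (A X : Type) [Ring A] [AddCommGroup X] : Type := A →+ X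

namespace TransHom

variable {A X : Type} [Ring A] [AddCommGroup X]

instance : AddCommGroup (TransHom A X) := inferInstanceAs (AddCommGroup (A →+ X))

instance : SMul A (TransHom A X) := ⟨fun a φ => AddMonoidHom.comp φ (AddMonoidHom.mulRight a)⟩

/-- Evaluation of an element of `TransHom A X` at `b : A`. -/
def ev (φ : TransHom A X) (b : A) : X := (show A →+ X from φ) b

theorem ev_smul (a : A) (φ : TransHom A X) (b : A) : (a • φ).ev b = φ.ev (b * a) := rfl

theorem ev_add (φ ψ : TransHom A X) (b : A) : (φ + ψ).ev b = φ.ev b + ψ.ev b := rfl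

theorem ev_zero (b : A) : (0 : TransHom A X).ev b = 0 := rfl

theorem ext_ev {φ ψ : TransHom A X} (h : ∀ b, φ.ev b = ψ.ev b) : φ = ψ :=
  AddMonoidHom.ext h

theorem ev_arg_add (φ : TransHom A X) (b c : A) : φ.ev (b + c) = φ.ev b + φ.ev c :=
  AddMonoidHom.map_add φ b c

theorem ev_arg_zero (φ : TransHom A X) : φ.ev 0 = 0 := AddMonoidHom.map_zero φ

instance : Module A (TransHom A X) where
  one_smul φ := ext_ev fun b => by rw [ev_smul, mul_one]
  mul_smul a c φ := ext_ev fun b => by rw [ev_smul, ev_smul, ev_smul, mul_assoc]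
  smul_zero a := rfl
  smul_add a φ ψ := rfl
  add_smul a c φ := ext_ev fun b => by
    rw [ev_smul, ev_add, ev_smul, ev_smul, mul_add, ev_arg_add]
  zero_smul φ := ext_ev fun b => by rw [ev_smul, mul_zero, ev_arg_zero, ev_zero]

end TransHom

section Induced

open TransHom

variable {A : Type} [Ring A] {f : A} {hf : f * f = f}
  {X : Type} [AddCommGroup X] [Module (Corner f hf) X]

theorem cornEl_add (a b : A) : cornEl hf (a + b) = cornEl hf a + cornEl hf b :=
  Subtype.ext (by
    change f * (a + b) * f = f * a * f + f * b * f
    rw [mul_add, add_mul])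

theorem cornEl_zero : cornEl hf (0 : A) = 0 :=
  Subtype.ext (by
    change f * 0 * f = 0
    rw [mul_zero, zero_mul])

theorem cornEl_one : cornEl hf (1 : A) = 1 :=
  Subtype.ext (by
    change f * 1 * f = f
    rw [mul_one, hf])

theorem cornEl_mul_coe (b : A) (c : Corner f hf) : cornEl hf (b * c.1) = cornEl hf b * c :=
  Subtype.ext (by
    change f * (b * c.1) * f = f * b * f * c.1
    rw [mul_assoc (f * b) f, c.2.1, ← mul_assoc, mul_assoc _ c.1 f, c.2.2])

theorem cornEl_mul_idem (b : A) : cornEl hf (b * f) = cornEl hf b :=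
  Subtype.ext (by
    change f * (b * f) * f = f * b * f
    rw [← mul_assoc, mul_assoc _ f f, hf])

/-- The additive map `b ↦ (f b f) • x` attached to `x : X`. -/
def orb (hf : f * f = f) [Module (Corner f hf) X] (x : X) : TransHom A X :=
  ({ toFun := fun b => cornEl hf b • x
     map_zero' := by rw [cornEl_zero, zero_smul]
     map_add' := fun a b => by rw [cornEl_add, add_smul] } : A →+ X)

theorem orb_ev (x : X) (b : A) : (orb hf x).ev b = cornEl hf b • x := rfl

theorem orb_add (x y : X) : orb hf (x + y) = orb hf x + orb hf y :=
  ext_ev fun b => by rw [ev_add, orb_ev, orb_ev, orb_ev, smul_add]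

theorem orb_zero : orb hf (0 : X) = 0 :=
  ext_ev fun b => by rw [orb_ev, smul_zero, ev_zero]

theorem orb_smul (c : Corner f hf) (x : X) : orb hf (c • x) = c.1 • orb hf x :=
  ext_ev fun b => by rw [ev_smul, orb_ev, orb_ev, cornEl_mul_coe, mul_smul]

theorem idem_smul_orb (x : X) : f • orb hf x = orb hf x :=
  ext_ev fun b => by rw [ev_smul, orb_ev, orb_ev, cornEl_mul_idem]

theorem orb_injective : Function.Injective (orb hf : X → TransHom A X) := by
  intro x y h
  have h1 := congrArg (fun φ => TransHom.ev φ 1) h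
  simpa only [orb_ev, cornEl_one, one_smul] using h1

/-- The `A`-submodule `A · X` of `TransHom A X` generated by the copy `orb hf '' X` of `X`. It is
a quotient of `Af ⊗ X` with the property that `f (A · X) ≅ X`. -/
def induced (hf : f * f = f) (X : Type) [AddCommGroup X] [Module (Corner f hf) X] :
    Submodule A (TransHom A X) :=
  Submodule.span A (Set.range (orb hf : X → TransHom A X))

theorem orb_mem (x : X) : orb hf x ∈ induced hf X := Submodule.subset_span ⟨x, rfl⟩

/-- `f (A · X) ⊆ X`: on generators, `f • (a • orb x) = (f a f) • orb x = orb ((f a f) • x)`. -/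
theorem exists_orb_of_mem {u : TransHom A X} (hu : u ∈ induced hf X) :
    ∃ x : X, f • u = orb hf x := by
  -- With `f * a` in place of `f` the statement is stable under scalar multiplication of `u`.
  suffices h : ∀ a : A, ∃ x : X, (f * a) • u = orb hf x by
    simpa only [mul_one] using h 1
  induction hu using Submodule.span_induction with
  | mem u hu =>
    obtain ⟨x, rfl⟩ := hu
    intro a
    refine ⟨cornEl hf a • x, ?_⟩
    rw [orb_smul]
    change _ = (f * a * f) • orb hf x
    rw [mul_smul (f * a) f, idem_smul_orb]
  | zero => exact fun a => ⟨0, by rw [smul_zero, orb_zero]⟩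
  | add u v _ _ hu hv =>
    intro a
    obtain ⟨x, hx⟩ := hu a
    obtain ⟨y, hy⟩ := hv a
    exact ⟨x + y, by rw [smul_add, hx, hy, orb_add]⟩
  | smul c u _ hu =>
    intro a
    obtain ⟨x, hx⟩ := hu (a * c)
    exact ⟨x, by rw [← hx, ← mul_smul, mul_assoc]⟩

/-- The copy of `X` inside `A · X`. -/
def orbI (hf : f * f = f) [Module (Corner f hf) X] (x : X) : induced hf X :=
  ⟨orb hf x, orb_mem x⟩

theorem idem_smul_orbI (x : X) : f • orbI hf x = orbI hf x := Subtype.ext (idem_smul_orb x)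

theorem orbI_add (x y : X) : orbI hf (x + y) = orbI hf x + orbI hf y :=
  Subtype.ext (orb_add x y)

theorem orbI_zero : orbI hf (0 : X) = 0 := Subtype.ext orb_zero

theorem orbI_smul (c : Corner f hf) (x : X) : orbI hf (c • x) = c.1 • orbI hf x :=
  Subtype.ext (orb_smul c x)

theorem orbI_injective : Function.Injective (orbI hf : X → induced hf X) :=
  fun _ _ h => orb_injective (congrArg Subtype.val h)

theorem exists_orbI (u : induced hf X) : ∃ x : X, f • u = orbI hf x := by
  obtain ⟨x, hx⟩ := exists_orb_of_mem u.2
  exact ⟨x, Subtype.ext hx⟩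

/-- A submodule of `A · X` containing the copy of `X` is everything. -/
theorem eq_top_of_orbI_mem {q : Submodule A (induced hf X)} (h : ∀ x, orbI hf x ∈ q) :
    q = ⊤ := by
  have hle : induced hf X ≤ q.map (induced hf X).subtype := by
    refine Submodule.span_le.2 ?_
    rintro _ ⟨x, rfl⟩
    exact ⟨orbI hf x, h x, rfl⟩
  refine eq_top_iff.2 fun u _ => ?_
  obtain ⟨v, hv, hvu⟩ := hle u.2
  rwa [← Subtype.ext hvu]

/-- For a submodule `p` of `A · X`, the submodule `p ∩ X` of `X`. -/
def trace (p : Submodule A (induced hf X)) : Submodule (Corner f hf) X where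
  carrier := {x | orbI hf x ∈ p}
  zero_mem' := by
    change orbI hf 0 ∈ p
    rw [orbI_zero]; exact p.zero_mem
  add_mem' {x y} hx hy := by
    change orbI hf (x + y) ∈ p
    rw [orbI_add]; exact p.add_mem hx hy
  smul_mem' c x hx := by
    change orbI hf (c • x) ∈ p
    rw [orbI_smul]; exact p.smul_mem _ hx

theorem mem_trace {p : Submodule A (induced hf X)} {x : X} : x ∈ trace p ↔ orbI hf x ∈ p :=
  Iff.rfl

theorem isCompl_trace {p q : Submodule A (induced hf X)} (h : IsCompl p q) :
    IsCompl (trace p) (trace q) := by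
  constructor
  · refine Submodule.disjoint_def.2 fun x hp hq => orbI_injective (hf := hf) ?_
    rw [orbI_zero]
    exact Submodule.disjoint_def.1 h.disjoint _ hp hq
  · refine codisjoint_iff.2 (eq_top_iff.2 fun x _ => ?_)
    have hx : orbI hf x ∈ p ⊔ q := by rw [h.sup_eq_top]; trivial
    obtain ⟨u, hu, v, hv, huv⟩ := Submodule.mem_sup.1 hx
    obtain ⟨y, hy⟩ := exists_orbI u
    obtain ⟨z, hz⟩ := exists_orbI v
    refine Submodule.mem_sup.2 ⟨y, ?_, z, ?_, orbI_injective (hf := hf) ?_⟩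
    · rw [mem_trace, ← hy]; exact p.smul_mem f hu
    · rw [mem_trace, ← hz]; exact q.smul_mem f hv
    · rw [orbI_add, ← hy, ← hz, ← smul_add, huv, idem_smul_orbI]

theorem trace_eq_bot_imp {p q : Submodule A (induced hf X)} (h : IsCompl p q)
    (hp : trace p = ⊥) : p = ⊥ := by
  have hq : trace q = ⊤ := by
    have h2 := (isCompl_trace h).sup_eq_top
    rwa [hp, bot_sup_eq] at h2
  have hq' : q = ⊤ := eq_top_of_orbI_mem fun x => by
    rw [← mem_trace, hq]; trivial
  have h3 := h.inf_eq_bot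
  rwa [hq', inf_top_eq] at h3

theorem induced_indec (hX : IsIndecModule (Corner f hf) X) :
    IsIndecModule A (induced hf X) := by
  obtain ⟨hnt, hdec⟩ := hX
  refine ⟨orbI_injective.nontrivial, fun p q h => ?_⟩
  rcases hdec _ _ (isCompl_trace h) with h1 | h1
  · exact Or.inl (trace_eq_bot_imp h h1)
  · exact Or.inr (trace_eq_bot_imp h.symm h1)

theorem induced_finite (hX : Module.Finite (Corner f hf) X) :
    Module.Finite A (induced hf X) := by
  obtain ⟨s, hs⟩ := hX.fg_top
  classical
  refine ⟨⟨s.image (orbI hf), eq_top_of_orbI_mem fun x => ?_⟩⟩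
  have hx : x ∈ Submodule.span (Corner f hf) (s : Set X) := by rw [hs]; trivial
  induction hx using Submodule.span_induction with
  | mem x hx => exact Submodule.subset_span (Finset.mem_coe.2 (Finset.mem_image_of_mem _ hx))
  | zero => rw [orbI_zero]; exact Submodule.zero_mem _
  | add x y _ _ hx hy => rw [orbI_add]; exact Submodule.add_mem _ hx hy
  | smul c x _ hx => rw [orbI_smul]; exact Submodule.smul_mem _ _ hx

/-- An `A`-linear isomorphism `A · X ≅ M` restricts to an isomorphism `X = f (A · X) ≅ f M` over
`fAf`. -/
theorem nonempty_equiv_cornerMod {M : Type} [AddCommGroup M] [Module A M]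
    (g : induced hf X ≃ₗ[A] M) : Nonempty (X ≃ₗ[Corner f hf] CornerMod f hf M) := by
  let T : X →ₗ[Corner f hf] CornerMod f hf M :=
    { toFun := fun x => ⟨g (orbI hf x), by rw [← map_smul, idem_smul_orbI]⟩
      map_add' := fun x y => Subtype.ext (by
        change g (orbI hf (x + y)) = g (orbI hf x) + g (orbI hf y)
        rw [orbI_add, map_add])
      map_smul' := fun c x => Subtype.ext (by
        change g (orbI hf (c • x)) = c.1 • g (orbI hf x)
        rw [orbI_smul, map_smul]) }
  refine ⟨LinearEquiv.ofBijective T ⟨fun x y h => ?_, fun m => ?_⟩⟩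
  · exact orbI_injective (g.injective (congrArg Subtype.val h))
  · obtain ⟨x, hx⟩ := exists_orbI (g.symm m.1)
    refine ⟨x, Subtype.ext ?_⟩
    change g (orbI hf x) = m.1
    rw [← hx, map_smul, g.apply_symm_apply, m.2]

end Induced

/-- Let `A` be directed and `f = Σ_{i ∈ S} e_i` for a subset `S` of the
index set. If `A` has, up to isomorphism, only finitely many indecomposable finitely generated
left modules, then so does the corner algebra `fAf`. -/
theorem statement12
    (k : Type) [Field k] (A : Type) [Ring A] [Algebra k A] [FiniteDimensional k A]
    {n : ℕ} (e : Fin n → A)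
    (hidem : ∀ i, e i * e i = e i)
    (horth : ∀ i j, i ≠ j → e i * e j = 0)
    (hsum : ∑ i, e i = 1)
    (hdir : IsDirectedAlgebra A e)
    (S : Finset (Fin n)) (f : A) (hfdef : f = ∑ i ∈ S, e i) (hf : f * f = f)
    (hrep : ∃ (N : ℕ) (M : Fin N → Type) (_ : ∀ i, AddCommGroup (M i))
        (_ : ∀ i, Module A (M i)),
      ∀ (X : Type) [AddCommGroup X] [Module A X], Module.Finite A X →
        IsIndecModule A X → ∃ i, Nonempty (X ≃ₗ[A] M i)) :
    ∃ (N : ℕ) (M : Fin N → Type) (_ : ∀ i, AddCommGroup (M i))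
        (_ : ∀ i, Module (Corner f hf) (M i)),
      ∀ (X : Type) [AddCommGroup X] [Module (Corner f hf) X],
        Module.Finite (Corner f hf) X → IsIndecModule (Corner f hf) X →
          ∃ i, Nonempty (X ≃ₗ[Corner f hf] M i) := by
  obtain ⟨N, M, iM, mM, hM⟩ := hrep
  refine ⟨N, fun i => CornerMod f hf (M i), inferInstance, inferInstance, ?_⟩
  intro X _ _ hfin hind
  obtain ⟨i, ⟨g⟩⟩ := hM (induced hf X) (induced_finite hfin) (induced_indec hind)
  exact ⟨i, nonempty_equiv_cornerMod g⟩
end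

section
/- Let A be a finite-dimensional algebra over a field k and let e be a primitive idempotent of A such that (1−e) A e = 0, eA(1−e) ≠ 0, and the corner algebra eAe is self-injective (injective as a left module over itself). Consider the left A-module H := Hom_{A^{op}}(D(Ae), A) of right A-module homomorphisms from D(Ae) = Hom_k(Ae, k) to A, with left A-action (a·ψ)(φ) = a·ψ(φ). If H is a projective left A-module, then H = 0. -/
/-!
Write `R = eAe` and `f = 1 - e`. Since `fAe = 0`, the left module `Ae` coincides with `R`, and
`a ↦ eae` is a ring homomorphism `A → R`. By Fitting's lemma applied to the indecomposable module
`Ae`, the ring `R` is local, with nilpotent Jacobson radical `J`.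

Every `ψ` in `H = Hom(D(Ae), A)` takes values in the left annihilator of `eAf` in `R`, because `e`
acts as the identity on `D(Ae)` and `eAf` acts as zero. As `eAf ≠ 0`, these values are non-units,
so they lie in `J`. Choose `r ≠ 0` in the last nonzero power of `J`; then `rJ = 0`, hence `rH = 0`.
For any `A`-linear `l : H → A` this gives `r * (e l(ψ) e) = 0`, so `e l(ψ) e` is a non-unit and
lies in `J` too.

If `H` is projective, the dual basis expansion `ψ = ∑ lᵢ(ψ) ψᵢ` therefore shows that if all values
of elements of `H` lie in `J ^ n`, then they lie in `J ^ (n + 1)`. Nilpotency of `J` forces `H = 0`.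
-/

set_option linter.unusedVariables false
set_option maxHeartbeats 1000000

/-- Right multiplication by `x ∈ eAe` on `Ae`, as an endomorphism of left `A`-modules. -/
def rightMulEnd {A : Type} [Ring A] {e : A} {he : e * e = e} (x : Corner e he) :
    Module.End A (LIdeal (A := A) e) where
  toFun m := ⟨m.1 * x.1, by rw [mul_assoc, x.2.2]⟩
  map_add' _ _ := Subtype.ext (add_mul _ _ _)
  map_smul' _ _ := Subtype.ext (mul_assoc _ _ _)

lemma rightMulEnd_pow_val {A : Type} [Ring A] {e : A} {he : e * e = e} (x : Corner e he)
    (n : ℕ) (m : LIdeal (A := A) e) : ((rightMulEnd x ^ n) m).1 = m.1 * (x ^ n).1 := by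
  induction n generalizing m with
  | zero => exact m.2.symm
  | succ n ih =>
    rw [pow_succ, pow_succ']
    exact (ih _).trans (mul_assoc _ _ _)

lemma isArtinianRing_corner (k : Type) [Field k] {A : Type} [Ring A] [Algebra k A]
    [FiniteDimensional k A] {e : A} (he : e * e = e) : IsArtinianRing (Corner e he) := by
  let i : Corner e he →ₗ[k] A :=
    { toFun := fun x => x.1, map_add' := fun _ _ => rfl, map_smul' := fun _ _ => rfl }
  have : FiniteDimensional k (Corner e he) :=
    FiniteDimensional.of_injective i fun _ _ h => Subtype.ext h
  exact IsArtinianRing.of_finite k _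

/-- Fitting's lemma for the indecomposable module `Ae`, whose endomorphism ring is `eAe` acting by
right multiplication. -/
lemma Corner.isNilpotent_or_isUnit (k : Type) [Field k] {A : Type} [Ring A] [Algebra k A]
    [FiniteDimensional k A] {e : A} (he : e * e = e)
    (hprim : IsIndecModule A (LIdeal (A := A) e)) (x : Corner e he) :
    IsNilpotent x ∨ IsUnit x := by
  have := isArtinianRing_corner k he
  have hA : IsArtinian A A := isArtinian_of_tower k inferInstance
  have hN : IsNoetherian A A := isNoetherian_of_tower k inferInstance
  let i : LIdeal (A := A) e →ₗ[A] A :=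
    { toFun := fun x => x.1, map_add' := fun _ _ => rfl, map_smul' := fun _ _ => rfl }
  have hi : Function.Injective i := fun _ _ h => Subtype.ext h
  have : IsArtinian A (LIdeal (A := A) e) := isArtinian_of_injective i hi
  have : IsNoetherian A (LIdeal (A := A) e) := isNoetherian_of_injective i hi
  obtain ⟨n, hn1, hc⟩ := ((Filter.eventually_ge_atTop 1).and
    (rightMulEnd x).eventually_isCompl_ker_pow_range_pow).exists
  let e' : LIdeal (A := A) e := ⟨e, he⟩
  rcases hprim.2 _ _ hc with h | h
  · right
    have htop := hc.codisjoint.eq_top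
    rw [h, bot_sup_eq] at htop
    obtain ⟨y, hy⟩ : e' ∈ LinearMap.range (rightMulEnd x ^ n) := htop ▸ Submodule.mem_top
    have hy' : y.1 * (x ^ n).1 = e := by
      rw [← rightMulEnd_pow_val, hy]
    have hl : (cornEl he y.1 * x ^ (n - 1)) * x = 1 := by
      rw [mul_assoc, ← pow_succ, Nat.sub_add_cancel hn1]
      apply Subtype.ext
      show e * y.1 * e * (x ^ n).1 = e
      rw [mul_assoc (e * y.1), (x ^ n).2.1, mul_assoc, hy', he]
    exact IsUnit.of_mul_eq_one_right _ hl
  · left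
    refine ⟨n, Subtype.ext ?_⟩
    have h0 : (rightMulEnd x ^ n) e' = 0 :=
      (Submodule.mem_bot A).1 (h ▸ LinearMap.mem_range_self _ e')
    have h3 := rightMulEnd_pow_val x n e'
    rw [h0] at h3
    exact (h3.trans (x ^ n).2.1).symm

/-- `eAe` is local: if `x` is a non-unit, then so is every `y * x`, which is therefore nilpotent,
and `1 + y * x` is invertible. -/
lemma Corner.mem_jacobson_of_not_isUnit (k : Type) [Field k] {A : Type} [Ring A] [Algebra k A]
    [FiniteDimensional k A] {e : A} (he : e * e = e)
    (hprim : IsIndecModule A (LIdeal (A := A) e)) (x : Corner e he) (hx : ¬ IsUnit x) :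
    x ∈ Ring.jacobson (Corner e he) := by
  have := isArtinianRing_corner k he
  rw [← Ideal.jacobson_bot, Ideal.mem_jacobson_iff]
  intro y
  have hyx : ¬ IsUnit (y * x) := by
    rintro ⟨u, hu⟩
    apply hx
    refine IsUnit.of_mul_eq_one_right (↑u⁻¹ * y) ?_
    rw [mul_assoc, ← hu, Units.inv_mul]
  have hnil := (Corner.isNilpotent_or_isUnit k he hprim (y * x)).resolve_right hyx
  obtain ⟨u, hu⟩ := hnil.isUnit_one_add
  refine ⟨↑u⁻¹, ?_⟩
  have h : (↑u⁻¹ : Corner e he) * y * x + ↑u⁻¹ - 1 = 0 := by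
    rw [sub_eq_zero, mul_assoc]
    calc _ = (↑u⁻¹ : Corner e he) * (1 + y * x) := by rw [mul_add, mul_one, add_comm]
      _ = 1 := by rw [← hu, Units.inv_mul]
  rw [h]
  exact zero_mem _

/-- When `(1 - e) A e = 0`, the compression `a ↦ e a e` is multiplicative. -/
def cornHom {A : Type} [Ring A] {e : A} (he : e * e = e) (h1 : ∀ a : A, (1 - e) * a * e = 0) :
    A →+* Corner e he where
  toFun := cornEl he
  map_one' := Subtype.ext (by show e * 1 * e = e; rw [mul_one, he])
  map_zero' := Subtype.ext (by show e * 0 * e = 0; simp)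
  map_add' a b := Subtype.ext (by
    show e * (a + b) * e = e * a * e + e * b * e
    rw [mul_add, add_mul])
  map_mul' a b := Subtype.ext (by
    show e * (a * b) * e = e * a * e * (e * b * e)
    have hb : b * e = e * b * e := by
      have := h1 b
      rwa [sub_mul, sub_mul, one_mul, sub_eq_zero] at this
    have hee : e * a * e * (e * b * e) = e * a * (e * e * (b * e)) := by simp only [mul_assoc]
    rw [hee, he, ← mul_assoc e b e, ← hb]
    simp only [mul_assoc])

/-- The values of an element of `Hom(D(Ae), A)` lie in `eAe`, because `e` acts as the identity
on `D(Ae)`. -/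
lemma hom_apply_eq (k : Type) [Field k] {A : Type} [Ring A] [Algebra k A] {e : A}
    (h1 : ∀ a : A, (1 - e) * a * e = 0)
    (ψ : (LIdeal (A := A) e →ₗ[k] k) →ₗ[Aᵐᵒᵖ] A) (φ : LIdeal (A := A) e →ₗ[k] k) :
    ψ φ = e * ψ φ * e := by
  have hb : ∀ b : A, b * e = e * b * e := fun b => by
    have := h1 b
    rwa [sub_mul, sub_mul, one_mul, sub_eq_zero] at this
  have hφ : MulOpposite.op e • φ = φ := LinearMap.ext fun m => congrArg φ (Subtype.ext (by
    show e * m.1 = m.1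
    calc e * m.1 = e * m.1 * e := by rw [mul_assoc, m.2]
      _ = m.1 := by rw [← hb, m.2]))
  have h := ψ.map_smul (MulOpposite.op e) φ
  rw [hφ, MulOpposite.smul_eq_mul_unop, MulOpposite.unop_op] at h
  rw [← hb, ← h]

/-- The values of an element of `Hom(D(Ae), A)` annihilate `eA(1 - e)` from the left, because
`eA(1 - e)` annihilates `D(Ae)`. -/
lemma hom_apply_mul (k : Type) [Field k] {A : Type} [Ring A] [Algebra k A] {e : A}
    (h1 : ∀ a : A, (1 - e) * a * e = 0)
    (ψ : (LIdeal (A := A) e →ₗ[k] k) →ₗ[Aᵐᵒᵖ] A) (φ : LIdeal (A := A) e →ₗ[k] k) (a : A) :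
    ψ φ * (e * a * (1 - e)) = 0 := by
  have hφ : MulOpposite.op (e * a * (1 - e)) • φ = 0 := LinearMap.ext fun m => by
    have h0 : lmulL k (e := e) (e * a * (1 - e)) m = 0 := Subtype.ext (by
      show e * a * (1 - e) * m.1 = 0
      rw [← m.2, mul_assoc (e * a), ← mul_assoc (1 - e), h1, mul_zero])
    show φ (lmulL k (e * a * (1 - e)) m) = 0
    rw [h0, map_zero]
  have h := ψ.map_smul (MulOpposite.op (e * a * (1 - e))) φ
  rw [hφ, map_zero, MulOpposite.smul_eq_mul_unop, MulOpposite.unop_op] at h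
  exact h.symm

/-- In a nontrivial Artinian ring the Jacobson radical `J` is nilpotent, so any nonzero `r` in its
last nonzero power satisfies `r J = 0`. -/
lemma exists_ne_zero_mul_jacobson_eq_zero (R : Type) [Ring R] [Nontrivial R] [IsArtinianRing R] :
    ∃ r : R, r ≠ 0 ∧ ∀ x ∈ Ring.jacobson R, r * x = 0 := by
  classical
  have hnil : ∃ n, Ring.jacobson R ^ n = 0 := IsSemiprimaryRing.isNilpotent
  obtain ⟨n, hn, hmin⟩ : ∃ n, Ring.jacobson R ^ (n + 1) = 0 ∧ Ring.jacobson R ^ n ≠ 0 := by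
    have hpos : Nat.find hnil ≠ 0 := fun h => by
      have := Nat.find_spec hnil
      rw [h, Submodule.pow_zero, Ideal.one_eq_top] at this
      exact top_ne_bot this
    obtain ⟨n, hn⟩ := Nat.exists_eq_succ_of_ne_zero hpos
    have hspec := Nat.find_spec hnil
    rw [hn] at hspec
    exact ⟨n, hspec, Nat.find_min hnil (by omega)⟩
  obtain ⟨r, hr, hr0⟩ := Submodule.exists_mem_ne_zero_of_ne_bot hmin
  refine ⟨r, hr0, fun x hx => ?_⟩
  have : r * x ∈ Ring.jacobson R ^ (n + 1) := by
    rw [Submodule.pow_succ]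
    exact Ideal.mul_mem_mul hr hx
  rw [hn] at this
  exact this

/-- Let `e` be a primitive idempotent of a finite-dimensional algebra `A`
with `(1−e) A e = 0`, `eA(1−e) ≠ 0`, and `eAe` self-injective. If the left `A`-module
`H = Hom_{Aᵒᵖ}(D(Ae), A)` is projective, then `H = 0`. -/
theorem statement14
    (k : Type) [Field k] (A : Type) [Ring A] [Algebra k A] [FiniteDimensional k A]
    (e : A) (he : e * e = e)
    (hprim : IsIndecModule A (LIdeal (A := A) e))
    (h1 : ∀ a : A, (1 - e) * a * e = 0)
    (h2 : ∃ a : A, e * a * (1 - e) ≠ 0)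
    (hinj : Module.Injective (Corner e he) (Corner e he))
    (hproj : Module.Projective A ((LIdeal (A := A) e →ₗ[k] k) →ₗ[Aᵐᵒᵖ] A)) :
    ∀ ψ : (LIdeal (A := A) e →ₗ[k] k) →ₗ[Aᵐᵒᵖ] A, ψ = 0 := by
  have hart := isArtinianRing_corner k he
  have hnt : Nontrivial (Corner e he) := by
    refine ⟨1, 0, fun h => ?_⟩
    obtain ⟨a, ha⟩ := h2
    have h' : e = 0 := congrArg Subtype.val h
    exact ha (by rw [h', zero_mul, zero_mul])
  let π := cornHom he h1
  let J := Ring.jacobson (Corner e he)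
  have hval : ∀ (ψ : (LIdeal (A := A) e →ₗ[k] k) →ₗ[Aᵐᵒᵖ] A) φ, (π (ψ φ)).1 = ψ φ :=
    fun ψ φ => (hom_apply_eq k h1 ψ φ).symm
  have hvalJ : ∀ (ψ : (LIdeal (A := A) e →ₗ[k] k) →ₗ[Aᵐᵒᵖ] A) φ, π (ψ φ) ∈ J := by
    intro ψ φ
    refine Corner.mem_jacobson_of_not_isUnit k he hprim _ ?_
    rintro ⟨u, hu⟩
    obtain ⟨a, ha⟩ := h2
    apply ha
    have hu1 : (↑u⁻¹ : Corner e he) * π (ψ φ) = 1 := by rw [← hu, Units.inv_mul]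
    have hu2 : (↑u⁻¹ : Corner e he).1 * ψ φ = e := by
      rw [← hval ψ φ]
      exact congrArg Subtype.val hu1
    calc e * a * (1 - e) = e * (e * a * (1 - e)) := by simp only [← mul_assoc, he]
      _ = (↑u⁻¹ : Corner e he).1 * (ψ φ * (e * a * (1 - e))) := by
        rw [← mul_assoc _ (ψ φ), hu2]
      _ = 0 := by rw [hom_apply_mul k h1, mul_zero]
  obtain ⟨r, hr0, hrJ⟩ := exists_ne_zero_mul_jacobson_eq_zero (Corner e he)
  have hr : ∀ ψ : (LIdeal (A := A) e →ₗ[k] k) →ₗ[Aᵐᵒᵖ] A, r.1 • ψ = 0 := fun ψ =>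
    LinearMap.ext fun φ => by
      show r.1 * ψ φ = 0
      rw [← hval ψ φ]
      exact congrArg Subtype.val (hrJ _ (hvalJ ψ φ))
  have hπr : π r.1 = r := Subtype.ext (by
    show e * r.1 * e = r.1
    rw [r.2.1, r.2.2])
  have hlam : ∀ (l : ((LIdeal (A := A) e →ₗ[k] k) →ₗ[Aᵐᵒᵖ] A) →ₗ[A] A) ψ, π (l ψ) ∈ J := by
    intro l ψ
    refine Corner.mem_jacobson_of_not_isUnit k he hprim _ fun hu => hr0 ?_
    have h0 : r.1 * l ψ = 0 := by
      rw [← smul_eq_mul, ← l.map_smul, hr, map_zero]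
    have h0' := congrArg π h0
    rw [map_mul, map_zero, hπr] at h0'
    exact hu.mul_left_eq_zero.1 h0'
  obtain ⟨s, hs⟩ := hproj.out
  have hpow : ∀ (n : ℕ) (ψ : (LIdeal (A := A) e →ₗ[k] k) →ₗ[Aᵐᵒᵖ] A) φ,
      π (ψ φ) ∈ J ^ n := by
    intro n
    induction n with
    | zero => intro ψ φ; rw [Submodule.pow_zero, Ideal.one_eq_top]; trivial
    | succ n ih =>
      intro ψ φ
      -- The dual basis expansion of `ψ`, evaluated at `φ`.
      have hexp : ψ φ = ∑ i ∈ (s ψ).support, s ψ i * i φ := by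
        conv_lhs => rw [← hs ψ, Finsupp.linearCombination_apply, Finsupp.sum, LinearMap.sum_apply]
        rfl
      rw [hexp, map_sum]
      refine Submodule.sum_mem _ fun i _ => ?_
      rw [map_mul, Ideal.IsTwoSided.pow_succ]
      exact Ideal.mul_mem_mul (hlam (Finsupp.lapply i ∘ₗ s) ψ) (ih i φ)
  obtain ⟨n, hn⟩ : IsNilpotent J := IsSemiprimaryRing.isNilpotent
  intro ψ
  refine LinearMap.ext fun φ => ?_
  have h0 := hpow n ψ φ
  rw [hn] at h0
  have h0' : π (ψ φ) = 0 := h0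
  rw [← hval ψ φ, h0']
  rfl
end

section
/- Let k be an algebraically closed field and Λ a finite-dimensional k-algebra of finite representation type; let M_1, …, M_n be a complete set of representatives of the isomorphism classes of indecomposable finitely generated left Λ-modules and A := End_Λ(M_1 ⊕ ⋯ ⊕ M_n) its Auslander algebra. The following are equivalent: (1) Λ is representation-directed, i.e. there is no sequence X_0 → X_1 → ⋯ → X_t (t ≥ 1) of nonzero non-isomorphism homomorphisms between finitely generated indecomposable Λ-modules with X_0 ≅ X_t; (2) the indices can be reordered so that Hom_Λ(M_i, M_j) ≠ 0 implies i ≤ j (i.e. the associated category of A is a directed category); (3) there exist a finite-dimensional hereditary k-algebra H (one in which every submodule of a projective left H-module is projective) and a surjective k-algebra homomorphism H → A. -/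
/-! Write `i → j` if there is a nonzero non-isomorphism `M_i → M_j`. Every acyclic relation on a
finite set is contained in a linear order (`exists_perm_of_acyclic`), so both (1) ⇒ (2) and
(3) ⇒ (2) reduce to showing that this relation has no cycles; for (1) there is nothing to do.

(2) ⇒ (1). Transporting a cycle to the representatives `M_i`, the order forces all of them to be
the same `M_i`, so it suffices that nonzero endomorphisms of `M_i` are bijective
(`bijective_of_directed`). Otherwise choose a nonzero non-bijective endomorphism with minimal
image; this image is indecomposable (`exists_indec_range`), hence some `M_j`, and the nonzero maps
`M_i → M_j → M_i` give `i = j`, although the image is a proper submodule.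

(2) ⇒ (3). By the previous point and since `k` is algebraically closed, `End(M_i) = k`. Hence `A`
is a quotient of the path algebra of a finite quiver all of whose arrows go up in the order of the
vertices (`exists_hereditary_cover`). That algebra is finite-dimensional, as paths have bounded
length. It is hereditary because it is quasi-free: homomorphisms out of it lift along square-zero
extensions (`PathAlg.isQuasiFree`). For a quasi-free algebra, a free cover `F → N` of a submodule
`N` of a projective module `P` extends to a module surjection `F ⊕ C → P`, with `C` a linear
complement of `N`; it splits, and so does `F → N` (`IsQuasiFree.projective_submodule`).

(3) ⇒ (2). Let `H → A` be surjective. The `A`-module `Hom(M_i, ⨁ M_l)` is covered over `H` by an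
indecomposable left ideal `P_i`, which is projective as `H` is hereditary (`exists_indec_cover`). A
nonzero non-isomorphism `M_i → M_j` lifts to a nonzero map `P_j → P_i`, which is injective because
its image is projective and `P_j` is indecomposable. If it is bijective, `M_i → M_j` is injective
and so `dim M_i < dim M_j`. Thus `(dim P_i, -dim M_i)` drops lexicographically along every arrow
`i → j`, and there are no cycles (`acyclic_of_hereditary`). -/

set_option linter.unusedVariables false
set_option maxHeartbeats 1000000

noncomputable section

/-! ### Quasi-free algebras are hereditary -/

/-- `H` is quasi-free (formally smooth in the noncommutative sense): algebra homomorphisms out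
of `H` lift along surjections with square-zero kernel. -/
def IsQuasiFree (k H : Type) [Field k] [Ring H] [Algebra k H] : Prop :=
  ∀ (B C : Type) [Ring B] [Ring C] [Algebra k B] [Algebra k C] (f : B →ₐ[k] C),
    Function.Surjective f → (∀ x y, f x = 0 → f y = 0 → x * y = 0) →
    ∀ g : H →ₐ[k] C, ∃ g' : H →ₐ[k] B, f.comp g' = g

section Extension

variable {k : Type} [Field k] {E F P : Type} [AddCommGroup E] [AddCommGroup F] [AddCommGroup P]
  [Module k E] [Module k F] [Module k P]

/-- Pairs of endomorphisms of `F` and `P` compatible with a linear map `u : F → P`. -/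
def pairAlg (u : F →ₗ[k] P) : Subalgebra k (Module.End k F × Module.End k P) where
  carrier := {x | ∀ v, u (x.1 v) = x.2 (u v)}
  mul_mem' {a b} ha hb v := by
    simp only [Set.mem_ofPred_eq] at ha hb
    simp [ha, hb]
  add_mem' {a b} ha hb v := by
    simp only [Set.mem_ofPred_eq] at ha hb
    simp [ha, hb]
  algebraMap_mem' r v := by simp

/-- Triples of endomorphisms of `E`, `F` and `P` compatible with linear maps
`F → E → P`. -/
def tripleAlg (j : F →ₗ[k] E) (ψ : E →ₗ[k] P) :
    Subalgebra k (Module.End k E × Module.End k F × Module.End k P) where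
  carrier := {x | (∀ v, x.1 (j v) = j (x.2.1 v)) ∧ ∀ v, ψ (x.1 v) = x.2.2 (ψ v)}
  mul_mem' {a b} ha hb := by
    simp only [Set.mem_ofPred_eq] at ha hb
    exact ⟨fun v => by simp [ha.1, hb.1], fun v => by simp [ha.2, hb.2]⟩
  add_mem' {a b} ha hb := by
    simp only [Set.mem_ofPred_eq] at ha hb
    exact ⟨fun v => by simp [ha.1, hb.1], fun v => by simp [ha.2, hb.2]⟩
  algebraMap_mem' r := ⟨fun v => by simp, fun v => by simp⟩

/-- Forgetting the endomorphism of the middle term. -/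
def tripleToPair (j : F →ₗ[k] E) (ψ : E →ₗ[k] P) (u : F →ₗ[k] P) (hu : ∀ v, ψ (j v) = u v) :
    tripleAlg j ψ →ₐ[k] pairAlg u :=
  ((AlgHom.snd k _ _).comp (tripleAlg j ψ).val).codRestrict (pairAlg u) fun x v => by
    have h := x.2
    change u (x.1.2.1 v) = x.1.2.2 (u v)
    rw [← hu, ← hu, ← h.1, h.2]

/-- Let `F → E → P` be linear maps, the first injective and the second surjective with
kernel contained in the image of the first. If `F` and `P` are modules over a quasi-free algebra
and the composite is linear over it, then the middle term `E` carries a compatible module structure. -/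
lemma IsQuasiFree.exists_middle {H : Type} [Ring H] [Algebra k H] (hH : IsQuasiFree k H)
    [Module H F] [IsScalarTower k H F] [Module H P] [IsScalarTower k H P]
    (j : F →ₗ[k] E) (hj : Function.Injective j) (ψ : E →ₗ[k] P) (hψ : Function.Surjective ψ)
    (hker : ∀ x, ψ x = 0 → ∃ v, j v = x)
    (hlin : ∀ (h : H) v, ψ (j (h • v)) = h • ψ (j v)) :
    ∃ ρ : H →ₐ[k] Module.End k E,
      (∀ h v, ρ h (j v) = j (h • v)) ∧ ∀ h x, ψ (ρ h x) = h • ψ x := by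
  let u : F →ₗ[k] P := ψ.comp j
  let T := tripleToPair j ψ u (fun _ => rfl)
  obtain ⟨s, hs⟩ := ψ.exists_rightInverse_of_surjective (LinearMap.range_eq_top.2 hψ)
  obtain ⟨r, hr⟩ := j.exists_leftInverse_of_injective (LinearMap.ker_eq_bot.2 hj)
  have hs' : ∀ x, ψ (s x) = x := fun x => LinearMap.congr_fun hs x
  have hr' : ∀ x, r (j x) = x := fun x => LinearMap.congr_fun hr x
  have hsurj : Function.Surjective T := by
    rintro ⟨⟨f, p⟩, hfp⟩
    have hfp' : ∀ v, ψ (j (f v)) = p (ψ (j v)) := hfp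
    -- on the image of `j` use `f`; on the complement `ker r`, lift `p` through the section `s`
    refine ⟨⟨(j ∘ₗ f ∘ₗ r + s ∘ₗ p ∘ₗ ψ ∘ₗ (LinearMap.id - j ∘ₗ r), f, p), ?_, ?_⟩, rfl⟩
    · intro v
      simp [hr']
    · intro v
      simp [hs', hfp']
  have hsq : ∀ x y, T x = 0 → T y = 0 → x * y = 0 := by
    rintro ⟨⟨b, f, p⟩, hb⟩ ⟨⟨b', f', p'⟩, hb'⟩ hx hy
    have hx' : f = 0 ∧ p = 0 := Prod.ext_iff.1 (congrArg Subtype.val hx)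
    have hy' : f' = 0 ∧ p' = 0 := Prod.ext_iff.1 (congrArg Subtype.val hy)
    obtain ⟨rfl, rfl⟩ := hx'
    obtain ⟨rfl, rfl⟩ := hy'
    have hbj : ∀ v, b (j v) = j 0 := hb.1
    have hψb : ∀ v, ψ (b' v) = 0 := hb'.2
    apply Subtype.ext
    refine Prod.ext (LinearMap.ext fun v => ?_) (Prod.ext (by simp) (by simp))
    obtain ⟨w, hw⟩ := hker _ (hψb v)
    change b (b' v) = 0
    rw [← hw, hbj, map_zero]
  let g : H →ₐ[k] pairAlg u :=
    ((Algebra.lsmul k k F).prod (Algebra.lsmul k k P)).codRestrict (pairAlg u) fun h v =>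
      hlin h v
  obtain ⟨g', hg'⟩ := hH _ _ T hsurj hsq g
  refine ⟨(AlgHom.fst k _ _).comp ((tripleAlg j ψ).val.comp g'), fun h v => ?_, fun h x => ?_⟩
  · have h1 := (g' h).2.1 v
    have h2 : (g' h).1.2.1 = (g h).1.1 :=
      congrArg (fun x : pairAlg u => x.1.1) (AlgHom.congr_fun hg' h)
    change (g' h).1.1 (j v) = _
    rw [h1, h2]
    rfl
  · have h1 := (g' h).2.2 x
    have h2 : (g' h).1.2.2 = (g h).1.2 :=
      congrArg (fun x : pairAlg u => x.1.2) (AlgHom.congr_fun hg' h)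
    change ψ ((g' h).1.1 x) = _
    rw [h1, h2]
    rfl

end Extension

/-- Over a quasi-free algebra submodules of projective modules are projective. Let `π : F → N` be
a free cover of a submodule `N` of the projective module `P`. Quasi-freeness yields a module `E`
containing `F` and a surjection `E → P` which extends `π` and maps only `F` into `N`; a section of
`E → P` therefore restricts to a section of `π`. -/
lemma IsQuasiFree.projective_submodule {k H : Type} [Field k] [Ring H] [Algebra k H]
    (hH : IsQuasiFree k H) (P : Type) [AddCommGroup P] [Module H P]
    (hP : Module.Projective H P) (N : Submodule H P) : Module.Projective H N := by
  let _ : Module k P := Module.compHom P (algebraMap k H)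
  have : IsScalarTower k H P := ⟨fun a h x => by
    change (a • h) • x = algebraMap k H a • (h • x)
    rw [Algebra.smul_def, mul_smul]⟩
  let F := N →₀ H
  let π : F →ₗ[H] N := Finsupp.linearCombination H id
  have hπ : Function.Surjective π := Finsupp.linearCombination_id_surjective H N
  obtain ⟨C, hC⟩ := (N.restrictScalars k).exists_isCompl
  let u : F →ₗ[k] P := (N.subtype ∘ₗ π).restrictScalars k
  let j : F →ₗ[k] F × C := LinearMap.inl k F C
  let ψ : F × C →ₗ[k] P := u.coprod C.subtype
  have hψ_apply : ∀ x, ψ x = (π x.1 : P) + x.2 := fun x => rfl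
  -- the preimage of `N` in `F × C` is the image of `F`
  have hmem : ∀ x, ψ x ∈ N → x.2 = 0 := by
    intro x hx
    rw [hψ_apply] at hx
    have h1 : (x.2 : P) ∈ N := (N.add_mem_iff_right (π x.1).2).1 hx
    exact Subtype.ext ((Submodule.disjoint_def.1 hC.disjoint) _ h1 x.2.2)
  have hψ : Function.Surjective ψ := by
    intro x
    obtain ⟨y, hy, z, hz, rfl⟩ := Submodule.mem_sup.1
      (hC.sup_eq_top ▸ Submodule.mem_top : x ∈ N.restrictScalars k ⊔ C)
    obtain ⟨f, hf⟩ := hπ ⟨y, hy⟩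
    exact ⟨(f, ⟨z, hz⟩), by rw [hψ_apply, hf]⟩
  obtain ⟨ρ, hρj, hρψ⟩ := hH.exists_middle j LinearMap.inl_injective ψ hψ
    (fun x hx => ⟨x.1, Prod.ext rfl (hmem x (hx ▸ N.zero_mem)).symm⟩)
    (fun h v => by simp [hψ_apply, j])
  let E := F × C
  let mE : Module H E := Module.compHom E ρ.toRingHom
  have smul_E : ∀ (h : H) (x : E), h • x = ρ h x := fun h x => rfl
  let ψH : E →ₗ[H] P :=
    { toFun := ψ, map_add' := ψ.map_add, map_smul' := fun h x => hρψ h x }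
  obtain ⟨s, hs⟩ := Module.projective_lifting_property ψH LinearMap.id hψ
  have hs' : ∀ x, ψ (s x) = x := fun x => LinearMap.congr_fun hs x
  have hs2 : ∀ n : N, s n = j (s n).1 := fun n =>
    Prod.ext rfl (hmem _ (by rw [hs']; exact n.2))
  let t : N →ₗ[H] F :=
    { toFun := fun n => (s n).1
      map_add' := fun a b => by rw [Submodule.coe_add, map_add]; rfl
      map_smul' := fun h n => by
        apply LinearMap.inl_injective (R := k) (M₂ := C)
        change j (s (h • n : N)).1 = j (h • (s n).1)
        rw [← hs2, ← hρj, ← hs2, ← smul_E, ← map_smul]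
        rfl }
  refine Module.Projective.of_split t π (LinearMap.ext fun n => Subtype.ext ?_)
  have h1 := hs' n
  rw [hs2, hψ_apply] at h1
  change (π (s n).1 : P) = n
  simpa [j] using h1

/-! ### The path algebra of an ordered quiver -/

section PathAlgebra

variable (k : Type) [Field k] {n : ℕ} {α : Type} (src tgt : α → Fin n)

/-- The free generator attached to the vertex `i`. -/
def vertexGen (α : Type) {n : ℕ} (i : Fin n) : FreeAlgebra k (Fin n ⊕ α) :=
  FreeAlgebra.ι k (Sum.inl i)

/-- The free generator attached to the arrow `a`. -/
def arrowGen (n : ℕ) {α : Type} (a : α) : FreeAlgebra k (Fin n ⊕ α) := FreeAlgebra.ι k (Sum.inr a)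

/-- The defining relations of the path algebra: the vertices are complete orthogonal idempotents,
and an arrow `a` satisfies `e_{tgt a} a = a = a e_{src a}`. -/
inductive PathRel : FreeAlgebra k (Fin n ⊕ α) → FreeAlgebra k (Fin n ⊕ α) → Prop
  | idem (i : Fin n) : PathRel (vertexGen k α i * vertexGen k α i) (vertexGen k α i)
  | orth (i j : Fin n) (h : i ≠ j) : PathRel (vertexGen k α i * vertexGen k α j) 0
  | complete : PathRel (∑ i, vertexGen k α i) 1
  | tgt (a : α) : PathRel (vertexGen k α (tgt a) * arrowGen k n a) (arrowGen k n a)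
  | src (a : α) : PathRel (arrowGen k n a * vertexGen k α (src a)) (arrowGen k n a)

/-- The path algebra of the quiver with vertices `Fin n` and arrows `a : src a → tgt a`, presented
by generators and relations. Paths are composed from right to left. -/
abbrev PathAlg : Type := RingQuot (PathRel k src tgt)

namespace PathAlg

/-- The idempotent of the vertex `i`. -/
def e (i : Fin n) : PathAlg k src tgt := RingQuot.mkAlgHom k _ (vertexGen k α i)

/-- The path of length one given by the arrow `a`. -/
def x (a : α) : PathAlg k src tgt := RingQuot.mkAlgHom k _ (arrowGen k n a)

lemma complete : CompleteOrthogonalIdempotents (e k src tgt) where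
  idem i := (map_mul _ _ _).symm.trans (RingQuot.mkAlgHom_rel k (PathRel.idem i))
  ortho i j h := (map_mul _ _ _).symm.trans
    ((RingQuot.mkAlgHom_rel k (PathRel.orth i j h)).trans (map_zero _))
  complete := by
    simp_rw [e]
    rw [← map_sum, ← map_one (RingQuot.mkAlgHom k (PathRel k src tgt))]
    exact RingQuot.mkAlgHom_rel k PathRel.complete

lemma e_tgt_mul_x (a : α) : e k src tgt (tgt a) * x k src tgt a = x k src tgt a := by
  rw [e, x, ← map_mul]
  exact RingQuot.mkAlgHom_rel k (PathRel.tgt a)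

lemma x_mul_e_src (a : α) : x k src tgt a * e k src tgt (src a) = x k src tgt a := by
  rw [e, x, ← map_mul]
  exact RingQuot.mkAlgHom_rel k (PathRel.src a)

lemma e_mul_x_of_ne {a : α} {i : Fin n} (h : i ≠ tgt a) :
    e k src tgt i * x k src tgt a = 0 := by
  rw [← e_tgt_mul_x, ← mul_assoc, (complete k src tgt).ortho h, zero_mul]

lemma x_mul_e_of_ne {a : α} {i : Fin n} (h : src a ≠ i) :
    x k src tgt a * e k src tgt i = 0 := by
  rw [← x_mul_e_src, mul_assoc, (complete k src tgt).ortho h, mul_zero]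

/-- The universal property of the path algebra. -/
lemma exists_lift {B : Type} [Ring B] [Algebra k B] {f : Fin n → B}
    (hf : CompleteOrthogonalIdempotents f) (y : α → B)
    (hy : ∀ a, f (tgt a) * y a = y a) (hy' : ∀ a, y a * f (src a) = y a) :
    ∃ g : PathAlg k src tgt →ₐ[k] B,
      (∀ i, g (e k src tgt i) = f i) ∧ ∀ a, g (x k src tgt a) = y a := by
  let g₀ : FreeAlgebra k (Fin n ⊕ α) →ₐ[k] B := FreeAlgebra.lift k (Sum.elim f y)
  have hv : ∀ i, g₀ (vertexGen k α i) = f i := fun i => by simp [g₀, vertexGen]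
  have ha : ∀ a, g₀ (arrowGen k n a) = y a := fun a => by simp [g₀, arrowGen]
  have hrel : ∀ ⦃p q⦄, PathRel k src tgt p q → g₀ p = g₀ q := by
    intro p q h
    induction h with
    | idem i => simpa [hv] using (hf.idem i).eq
    | orth i j h => simpa [hv] using hf.ortho h
    | complete => simpa [hv] using hf.complete
    | tgt a => simpa [hv, ha] using hy a
    | src a => simpa [hv, ha] using hy' a
  exact ⟨RingQuot.liftAlgHom k ⟨g₀, hrel⟩,
    fun i => by rw [e, RingQuot.liftAlgHom_mkAlgHom_apply, hv],
    fun a => by rw [x, RingQuot.liftAlgHom_mkAlgHom_apply, ha]⟩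

lemma hom_ext {B : Type} [Ring B] [Algebra k B] {g g' : PathAlg k src tgt →ₐ[k] B}
    (he : ∀ i, g (e k src tgt i) = g' (e k src tgt i))
    (hx : ∀ a, g (x k src tgt a) = g' (x k src tgt a)) : g = g' := by
  apply RingQuot.ringQuot_ext'
  apply FreeAlgebra.hom_ext
  funext z
  rcases z with i | a
  · exact he i
  · exact hx a

/-- Idempotents lift along square-zero extensions, and an arrow then lifts to any preimage cut
down by the lifted idempotents. -/
lemma isQuasiFree : IsQuasiFree k (PathAlg k src tgt) := by
  intro B C _ _ _ _ f hf hsq g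
  obtain ⟨e', he', hfe⟩ := CompleteOrthogonalIdempotents.lift_of_isNilpotent_ker f.toRingHom
    (fun z hz => ⟨2, by rw [pow_two]; exact hsq z z hz hz⟩)
    ((complete k src tgt).map g.toRingHom) (fun i => hf _)
  have hfe' : ∀ i, f (e' i) = g (e k src tgt i) := fun i => congrFun hfe i
  choose y hy using fun a => hf (g (x k src tgt a))
  obtain ⟨g', hg', hg''⟩ := exists_lift k src tgt he' (fun a => e' (tgt a) * y a * e' (src a))
    (fun a => by rw [← mul_assoc, ← mul_assoc, (he'.idem _).eq])
    (fun a => by rw [mul_assoc, (he'.idem _).eq])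
  refine ⟨g', hom_ext k src tgt (fun i => ?_) fun a => ?_⟩
  · simp [hg', hfe']
  · simp only [AlgHom.comp_apply, hg'', map_mul, hfe', hy]
    rw [← map_mul, e_tgt_mul_x, ← map_mul, x_mul_e_src]

/-- If all arrows go up in the order of the vertices, the path algebra of a finite quiver is
finite-dimensional: a path of length `r` ends at a vertex `≥ r`, so there are no paths of
length `n`. -/
lemma finiteDimensional [Finite α] (hlt : ∀ a, src a < tgt a) :
    FiniteDimensional k (PathAlg k src tgt) := by
  let S : Submodule k (PathAlg k src tgt) := Submodule.span k (Set.range (e k src tgt))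
  let V : Submodule k (PathAlg k src tgt) := Submodule.span k (Set.range (x k src tgt))
  have hV : ∀ r : ℕ, ∀ v ∈ V ^ r, ∀ j : Fin n, (j : ℕ) < r → e k src tgt j * v = 0 := by
    intro r
    induction r with
    | zero => intro v _ j hj; omega
    | succ r ih =>
      intro v hv j hj
      rw [pow_succ'] at hv
      induction hv using Submodule.mul_induction_on' with
      | mem_mul_mem y hy v hv =>
        induction hy using Submodule.span_induction with
        | mem y hy =>
          obtain ⟨a, rfl⟩ := hy
          by_cases hja : j = tgt a
          · have h1 : (src a : ℕ) < r := by
              have := Fin.lt_def.1 (hlt a)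
              subst hja
              omega
            rw [← x_mul_e_src, mul_assoc (x k src tgt a), ih v hv _ h1, mul_zero, mul_zero]
          · rw [← mul_assoc, e_mul_x_of_ne k src tgt hja, zero_mul]
        | zero => simp
        | add y z _ _ hy hz => rw [add_mul, mul_add, hy, hz, add_zero]
        | smul c y _ hy => rw [smul_mul_assoc, mul_smul_comm, hy, smul_zero]
      | add y _ z _ hy hz => rw [mul_add, hy, hz, add_zero]
  have hVn : V ^ n = ⊥ := by
    rw [eq_bot_iff]
    intro v hv
    rw [Submodule.mem_bot, ← one_mul v, ← (complete k src tgt).complete, Finset.sum_mul]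
    exact Finset.sum_eq_zero fun j _ => hV n v hv j j.2
  let W : Submodule k (PathAlg k src tgt) := ⨆ r : Fin n, S * V ^ (r : ℕ)
  have hWle : ∀ r : ℕ, S * V ^ r ≤ W := by
    intro r
    by_cases hr : r < n
    · exact le_iSup (fun r : Fin n => S * V ^ (r : ℕ)) ⟨r, hr⟩
    · obtain ⟨m, rfl⟩ := Nat.exists_eq_add_of_le (not_lt.1 hr)
      simp [pow_add, hVn]
  have he : ∀ i, ∀ w ∈ W, e k src tgt i * w ∈ W := by
    intro i
    suffices h : W ≤ W.comap (LinearMap.mulLeft k (e k src tgt i)) from h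
    refine iSup_le fun r => Submodule.mul_le.2 fun s hs v hv => ?_
    change e k src tgt i * (s * v) ∈ W
    rw [← mul_assoc]
    refine hWle r (Submodule.mul_mem_mul ?_ hv)
    induction hs using Submodule.span_induction with
    | mem s hs =>
      obtain ⟨j, rfl⟩ := hs
      by_cases hij : i = j
      · subst hij
        rw [((complete k src tgt).idem i).eq]
        exact Submodule.subset_span ⟨i, rfl⟩
      · rw [(complete k src tgt).ortho hij]
        exact zero_mem _
    | zero => simp
    | add y z _ _ hy hz => rw [mul_add]; exact add_mem hy hz
    | smul c y _ hy => rw [mul_smul_comm]; exact Submodule.smul_mem _ _ hy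
  have hx : ∀ a, ∀ w ∈ W, x k src tgt a * w ∈ W := by
    intro a
    suffices h : W ≤ W.comap (LinearMap.mulLeft k (x k src tgt a)) from h
    refine iSup_le fun r => Submodule.mul_le.2 fun s hs v hv => ?_
    change x k src tgt a * (s * v) ∈ W
    refine hWle (r + 1) ?_
    rw [← mul_assoc]
    induction hs using Submodule.span_induction with
    | mem s hs =>
      obtain ⟨j, rfl⟩ := hs
      by_cases hij : src a = j
      · subst hij
        rw [x_mul_e_src, ← e_tgt_mul_x, mul_assoc, pow_succ']
        exact Submodule.mul_mem_mul (Submodule.subset_span ⟨_, rfl⟩)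
          (Submodule.mul_mem_mul (Submodule.subset_span ⟨a, rfl⟩) hv)
      · rw [x_mul_e_of_ne k src tgt hij, zero_mul]
        exact zero_mem _
    | zero => simp
    | add y z _ _ hy hz => rw [mul_add, add_mul]; exact add_mem hy hz
    | smul c y _ hy => rw [mul_smul_comm, smul_mul_assoc]; exact Submodule.smul_mem _ _ hy
  have h1 : (1 : PathAlg k src tgt) ∈ W := by
    rw [← (complete k src tgt).complete]
    refine sum_mem fun i _ => hWle 0 ?_
    rw [pow_zero, mul_one]
    exact Submodule.subset_span ⟨i, rfl⟩
  -- `W` is stable under left multiplication by the generators and contains `1`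
  have hall : ∀ p : FreeAlgebra k (Fin n ⊕ α), ∀ w ∈ W,
      RingQuot.mkAlgHom k (PathRel k src tgt) p * w ∈ W := by
    intro p
    induction p using FreeAlgebra.induction with
    | grade0 c =>
      intro w hw
      rw [AlgHom.commutes, ← Algebra.smul_def]
      exact W.smul_mem c hw
    | grade1 z =>
      rcases z with i | a
      · exact he i
      · exact hx a
    | mul p q hp hq =>
      intro w hw
      rw [map_mul, mul_assoc]
      exact hp _ (hq _ hw)
    | add p q hp hq =>
      intro w hw
      rw [map_add, add_mul]
      exact add_mem (hp _ hw) (hq _ hw)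
  have htop : W = ⊤ := by
    rw [eq_top_iff]
    intro h _
    obtain ⟨p, rfl⟩ := RingQuot.mkAlgHom_surjective k (PathRel k src tgt) h
    simpa using hall p 1 h1
  refine ⟨?_⟩
  rw [← htop]
  exact Submodule.fg_iSup _ fun r =>
    (Submodule.fg_span (Set.finite_range _)).mul ((Submodule.fg_span (Set.finite_range _)).pow _)

end PathAlg

end PathAlgebra

/-- A finite-dimensional algebra with a directed complete family of orthogonal idempotents `e_i`
whose corners `e_i A e_i` are one-dimensional is a quotient of a finite-dimensional hereditary
algebra, namely of the path algebra whose arrows `i → j`, for `i < j`, are the elements of a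
basis of `A`; the arrow of `b` is sent to `e_j b e_i`. -/
lemma exists_hereditary_cover (k : Type) [Field k] {A : Type} [Ring A] [Algebra k A]
    [FiniteDimensional k A] {n : ℕ} {f : Fin n → A} (hf : CompleteOrthogonalIdempotents f)
    (hdir : ∀ i j, j < i → ∀ a, f j * a * f i = 0)
    (hend : ∀ i a, ∃ c : k, f i * a * f i = c • f i) :
    ∃ (H : Type) (_ : Ring H) (_ : Algebra k H), FiniteDimensional k H ∧
      (∀ (P : Type) [AddCommGroup P] [Module H P], Module.Projective H P →
        ∀ N : Submodule H P, Module.Projective H ↥N) ∧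
      ∃ φ : H →ₐ[k] A, Function.Surjective φ := by
  let b := Module.finBasis k A
  let α : Type := {p : Fin n × Fin n // p.1 < p.2} × Fin (Module.finrank k A)
  let src : α → Fin n := fun a => a.1.1.1
  let tgt : α → Fin n := fun a => a.1.1.2
  obtain ⟨φ, hφe, hφx⟩ := PathAlg.exists_lift k src tgt hf
    (fun a => f (tgt a) * b a.2 * f (src a))
    (fun a => by rw [← mul_assoc, ← mul_assoc, (hf.idem _).eq])
    (fun a => by rw [mul_assoc, (hf.idem _).eq])
  refine ⟨PathAlg k src tgt, inferInstance, inferInstance,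
    PathAlg.finiteDimensional k src tgt fun a => a.1.2,
    fun P _ _ hP N => (PathAlg.isQuasiFree k src tgt).projective_submodule P hP N, φ, ?_⟩
  have key : ∀ i j a, f j * a * f i ∈ φ.range := by
    intro i j a
    rcases lt_trichotomy i j with h | rfl | h
    · rw [← b.sum_repr a, Finset.mul_sum, Finset.sum_mul]
      refine sum_mem fun c _ => ?_
      rw [mul_smul_comm, smul_mul_assoc]
      exact φ.range.smul_mem ⟨_, hφx (⟨(i, j), h⟩, c)⟩ _
    · obtain ⟨c, hc⟩ := hend i a
      rw [hc]
      exact φ.range.smul_mem ⟨_, hφe i⟩ _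
    · rw [hdir i j h]
      exact zero_mem _
  intro a
  have ha : a = ∑ j, ∑ i, f j * a * f i := by
    simp_rw [← Finset.mul_sum, ← Finset.sum_mul, hf.complete, one_mul, mul_one]
  have : a ∈ φ.range := by
    rw [ha]
    exact sum_mem fun j _ => sum_mem fun i _ => key i j a
  exact this

/-! ### Maps between indecomposable modules -/

section Modules

variable {L : Type} [Ring L]

/-- Fitting: an endomorphism of an indecomposable module of finite length is bijective or
nilpotent, so one of two endomorphisms with sum `1` is bijective. -/
lemma IsIndecModule.isUnit_or_isUnit {X : Type} [AddCommGroup X] [Module L X] [IsArtinian L X]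
    [IsNoetherian L X] (hX : IsIndecModule L X) (a b : Module.End L X) (hab : a + b = 1) :
    IsUnit a ∨ IsUnit b := by
  obtain ⟨N, hN⟩ := Filter.eventually_atTop.1 a.eventually_isCompl_ker_pow_range_pow
  have hN := hN (N + 1) (Nat.le_succ N)
  rcases hX.2 _ _ hN with h | h
  · left
    have h1 : Function.Injective (a ^ (N + 1)) := LinearMap.ker_eq_bot.1 h
    have h2 : Function.Injective a := by
      rw [pow_succ, Module.End.mul_eq_comp, LinearMap.coe_comp] at h1
      exact h1.of_comp
    exact (Module.End.isUnit_iff a).2 (IsArtinian.bijective_of_injective_endomorphism a h2)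
  · right
    have h1 : IsNilpotent a := ⟨N + 1, LinearMap.range_eq_bot.1 h⟩
    have h2 : b = 1 - a := by rw [← hab]; abel
    rw [h2]
    exact h1.isUnit_one_sub

/-- If an Artinian module `X` has a nonzero non-surjective endomorphism, then one with minimal
image has indecomposable image: a decomposition of the image would provide, by projection, an
endomorphism with smaller image. -/
lemma exists_indec_range {X : Type} [AddCommGroup X] [Module L X] [IsArtinian L X]
    (g₀ : Module.End L X) (h0 : g₀ ≠ 0) (h0' : LinearMap.range g₀ ≠ ⊤) :
    ∃ g : Module.End L X, g ≠ 0 ∧ LinearMap.range g ≠ ⊤ ∧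
      IsIndecModule L (LinearMap.range g) := by
  obtain ⟨I, ⟨g, rfl, hg0, hgt⟩, hmin⟩ := IsArtinian.set_has_minimal
    {I : Submodule L X | ∃ g : Module.End L X, LinearMap.range g = I ∧ g ≠ 0 ∧ I ≠ ⊤}
    ⟨_, g₀, rfl, h0, h0'⟩
  refine ⟨g, hg0, hgt, Submodule.nontrivial_iff_ne_bot.2 (mt LinearMap.range_eq_bot.1 hg0),
    fun p q hpq => ?_⟩
  by_contra! hne
  let g' : Module.End L X :=
    (LinearMap.range g).subtype ∘ₗ p.subtype ∘ₗ p.projectionOnto q hpq ∘ₗ g.rangeRestrict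
  have hr : LinearMap.range g' = p.map (LinearMap.range g).subtype := by
    rw [LinearMap.range_comp, LinearMap.range_comp, LinearMap.range_comp,
      LinearMap.range_rangeRestrict, Submodule.map_top, Submodule.range_projectionOnto,
      Submodule.map_top, Submodule.range_subtype]
  have hle : LinearMap.range g' ≤ LinearMap.range g := by
    rw [hr]
    exact Submodule.map_subtype_le _ _
  have hg' : g' ≠ 0 := by
    intro h
    rw [h, LinearMap.range_zero] at hr
    exact hne.1 (Submodule.map_injective_of_injective (Submodule.subtype_injective _)
      (by rw [Submodule.map_bot]; exact hr.symm))
  have heq : LinearMap.range g' = LinearMap.range g := by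
    by_contra h
    exact hmin _ ⟨g', rfl, hg', fun h' => hgt (top_le_iff.1 (h' ▸ hle))⟩ (lt_of_le_of_ne hle h)
  have hp : p = ⊤ := by
    apply Submodule.map_injective_of_injective (Submodule.subtype_injective (LinearMap.range g))
    rw [← hr, heq, Submodule.map_top, Submodule.range_subtype]
  exact hne.2 (by simpa [hp] using hpq.inf_eq_bot)

end Modules

lemma exists_linearOrder {α : Type} (s : α → α → Prop) (hs : IsLinearOrder α s) :
    ∃ lo : LinearOrder α, ∀ i j, s i j → lo.le i j :=
  ⟨{ le := s
     le_refl := hs.refl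
     le_trans := hs.trans
     le_antisymm := hs.antisymm
     le_total := hs.total
     toDecidableLE := Classical.decRel _ }, fun _ _ h => h⟩

/-- A relation on `Fin n` without cycles is contained in a linear order. -/
lemma exists_perm_of_acyclic {n : ℕ} (R : Fin n → Fin n → Prop)
    (hR : ∀ i, ¬ Relation.TransGen R i i) :
    ∃ σ : Equiv.Perm (Fin n), ∀ i j, R i j → σ i ≤ σ j := by
  have hpo : IsPartialOrder (Fin n) (Relation.ReflTransGen R) :=
    { refl := fun _ => Relation.ReflTransGen.refl
      trans := fun _ _ _ => Relation.ReflTransGen.trans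
      antisymm := fun a b hab hba => by
        rcases Relation.reflTransGen_iff_eq_or_transGen.1 hab with h | h
        · exact h.symm
        · exact absurd (h.trans_left hba) (hR a) }
  obtain ⟨s, hs, hle⟩ := extend_partialOrder (Relation.ReflTransGen R)
  -- a synonym of `Fin n` carrying the linear order `s`
  obtain ⟨T, lo, ft, eT, heT⟩ : ∃ (T : Type) (_ : LinearOrder T) (_ : Fintype T)
      (eT : Fin n ≃ T), ∀ i j, s i j → eT i ≤ eT j := by
    obtain ⟨lo, hlo⟩ := exists_linearOrder s hs
    exact ⟨Fin n, lo, inferInstance, Equiv.refl _, hlo⟩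
  have hcard : Fintype.card T = n := by
    rw [← Fintype.card_congr eT, Fintype.card_fin]
  exact ⟨eT.trans (monoEquivOfFin T hcard).symm.toEquiv, fun i j h =>
    (monoEquivOfFin T hcard).symm.monotone (heT i j (hle _ _ (Relation.ReflTransGen.single h)))⟩

lemma exists_chain_of_transGen {α : Type} {R : α → α → Prop} {a b : α}
    (h : Relation.TransGen R a b) :
    ∃ (t : ℕ) (f : ℕ → α), 1 ≤ t ∧ f 0 = a ∧ f t = b ∧ ∀ s < t, R (f s) (f (s + 1)) := by
  induction h with
  | single h =>
    rename_i b
    refine ⟨1, fun s => if s = 0 then a else b, le_rfl, by simp, by simp, fun s hs => ?_⟩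
    obtain rfl : s = 0 := by omega
    simpa using h
  | tail _ h ih =>
    rename_i b c _
    obtain ⟨t, f, ht, h0, hft, hf⟩ := ih
    refine ⟨t + 1, fun s => if s ≤ t then f s else c, by omega, by simp [h0], by simp,
      fun s hs => ?_⟩
    rcases Nat.lt_succ_iff_lt_or_eq.1 hs with hs | rfl
    · have h1 : s ≤ t := hs.le
      have h2 : s + 1 ≤ t := hs
      simpa [h1, h2] using hf s hs
    · simpa [hft] using h

/-! ### Quotients of hereditary algebras -/

section Hereditary

/-- The image of a nonzero map into a module with projective submodules is projective, so the
kernel is a direct summand; hence the map is injective if its source is indecomposable. -/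
lemma injective_of_hereditary {H P P' : Type} [Ring H] [AddCommGroup P] [Module H P]
    [AddCommGroup P'] [Module H P'] (hP : IsIndecModule H P)
    (hher : ∀ N : Submodule H P', Module.Projective H N) (g : P →ₗ[H] P') (hg : g ≠ 0) :
    Function.Injective g := by
  have := hher (LinearMap.range g)
  obtain ⟨s, hs⟩ := Module.projective_lifting_property g.rangeRestrict LinearMap.id
    g.surjective_rangeRestrict
  have hs' : ∀ y, g.rangeRestrict (s y) = y := fun y => LinearMap.congr_fun hs y
  have hcompl : IsCompl (LinearMap.ker g) (LinearMap.range s) := by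
    constructor
    · rw [Submodule.disjoint_def]
      rintro _ hx ⟨y, rfl⟩
      have : y = 0 := by
        rw [← hs' y]
        exact Subtype.ext hx
      rw [this, map_zero]
    · rw [codisjoint_iff, eq_top_iff]
      intro x _
      refine Submodule.mem_sup.2 ⟨x - s (g.rangeRestrict x), ?_, s (g.rangeRestrict x), ⟨_, rfl⟩,
        by simp⟩
      have h1 : g (s (g.rangeRestrict x)) = g x := congrArg Subtype.val (hs' (g.rangeRestrict x))
      simp [LinearMap.mem_ker, h1]
  rcases hP.2 _ _ hcompl with h | h
  · exact LinearMap.ker_eq_bot.1 h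
  · refine absurd (LinearMap.ext fun x => ?_) hg
    have h1 := hs' (g.rangeRestrict x)
    rw [LinearMap.range_eq_bot.1 h, LinearMap.zero_apply, map_zero] at h1
    exact (congrArg Subtype.val h1).symm

variable {L : Type} [Ring L] {N : Type} [AddCommGroup N] [Module L N]
  {H : Type} [Ring H] {φ : H →+* Module.End L N}

/-- Let `ι : X → N` be the inclusion of an indecomposable direct summand and `H → End N` a
surjection. A left ideal `P` of `H` which is minimal with `ι ∈ P • ι` is indecomposable: the
module `Hom(X, N) = H • ι` is local. -/
lemma exists_indec_cover [IsArtinianRing H] (hφ : Function.Surjective φ)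
    {X : Type} [AddCommGroup X] [Module L X] [IsArtinian L X] [IsNoetherian L X]
    (hX : IsIndecModule L X) (ι : X →ₗ[L] N) (π : N →ₗ[L] X) (hπ : π ∘ₗ ι = LinearMap.id) :
    ∃ P : Submodule H H, IsIndecModule H P ∧ ∃ u ∈ P, φ u ∘ₗ ι = ι := by
  obtain ⟨P, ⟨u, hu, huι⟩, hmin⟩ := IsArtinian.set_has_minimal
    {P : Submodule H H | ∃ u ∈ P, φ u ∘ₗ ι = ι} ⟨⊤, 1, trivial, by rw [map_one]; rfl⟩
  have hι : ι ≠ 0 := by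
    rintro rfl
    obtain ⟨x, hx⟩ := @exists_ne X hX.1 0
    exact hx (by simpa using (LinearMap.congr_fun hπ x).symm)
  -- a part of a decomposition of `P` on which `π φ(u₁) ι` is invertible is all of `P`
  have key : ∀ (p : Submodule H P) (u₁ : P), u₁ ∈ p →
      IsUnit (π ∘ₗ φ u₁ ∘ₗ ι : Module.End L X) → p = ⊤ := by
    intro p u₁ hu₁ hw
    obtain ⟨w, hw⟩ := hw
    obtain ⟨h, hh⟩ := hφ (ι ∘ₗ (↑w⁻¹ : Module.End L X) ∘ₗ π)
    have hmem : ∃ u ∈ p.map P.subtype, φ u ∘ₗ ι = ι := by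
      refine ⟨_, ⟨h • u₁, p.smul_mem h hu₁, rfl⟩, ?_⟩
      have h1 : φ (P.subtype (h • u₁)) ∘ₗ ι
          = ι ∘ₗ ((↑w⁻¹ : Module.End L X) * (π ∘ₗ φ u₁ ∘ₗ ι)) := by
        rw [map_smul, smul_eq_mul, map_mul, hh]
        rfl
      rw [h1, ← hw, Units.inv_mul]
      rfl
    have heq : p.map P.subtype = P := by
      by_contra hne
      exact hmin _ hmem (lt_of_le_of_ne (Submodule.map_subtype_le _ _) hne)
    apply Submodule.map_injective_of_injective (Submodule.subtype_injective P)
    rw [heq, Submodule.map_top, Submodule.range_subtype]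
  refine ⟨P, ⟨Submodule.nontrivial_iff_ne_bot.2 ?_, fun p q hpq => ?_⟩, u, hu, huι⟩
  · rintro rfl
    rw [(Submodule.mem_bot H).1 hu, map_zero] at huι
    exact hι (by rw [← huι]; rfl)
  · obtain ⟨u₁, h₁, u₂, h₂, h₁₂⟩ := Submodule.mem_sup.1
      (hpq.sup_eq_top ▸ Submodule.mem_top : (⟨u, hu⟩ : P) ∈ p ⊔ q)
    have hsum : (u₁ : H) + u₂ = u := congrArg Subtype.val h₁₂
    have hone : (π ∘ₗ φ u₁ ∘ₗ ι : Module.End L X) + (π ∘ₗ φ u₂ ∘ₗ ι : Module.End L X) = 1 := by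
      rw [← LinearMap.comp_add, ← LinearMap.add_comp, ← map_add, hsum, huι, hπ]
      rfl
    rcases hX.isUnit_or_isUnit _ _ hone with h | h
    · exact Or.inr (by simpa [key p u₁ h₁ h] using hpq.inf_eq_bot)
    · exact Or.inl (by simpa [key q u₂ h₂ h] using hpq.inf_eq_bot)

/-- Let `P` and `P'` be left ideals of `H` mapping to `Hom(X, N)` and `Hom(Y, N)` by
`p ↦ φ(p) ι`, the former surjectively. If `P'` is projective, precomposition with `g : X → Y`,
as a map `Hom(Y, N) → Hom(X, N)`, lifts to a map `P' → P`. -/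
lemma exists_lift_precomp (hφ : Function.Surjective φ) {X Y : Type} [AddCommGroup X] [Module L X]
    [AddCommGroup Y] [Module L Y] (ιX : X →ₗ[L] N) (πX : N →ₗ[L] X)
    (hπX : πX ∘ₗ ιX = LinearMap.id) (ιY : Y →ₗ[L] N) (P P' : Submodule H H)
    (hP' : Module.Projective H P') (hP : ∃ u ∈ P, φ u ∘ₗ ιX = ιX) (g : X →ₗ[L] Y) :
    ∃ G : P' →ₗ[H] P, ∀ p : P', φ (G p) ∘ₗ ιX = φ p ∘ₗ ιY ∘ₗ g := by
  let _ : Module H (X →ₗ[L] N) := Module.compHom _ φ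
  let fX : P →ₗ[H] (X →ₗ[L] N) :=
    { toFun := fun p => φ p ∘ₗ ιX
      map_add' := fun p q => by rw [Submodule.coe_add, map_add, LinearMap.add_comp]
      map_smul' := fun h p => by
        rw [Submodule.coe_smul, smul_eq_mul, map_mul]
        rfl }
  let fY : P' →ₗ[H] (X →ₗ[L] N) :=
    { toFun := fun p => φ p ∘ₗ ιY ∘ₗ g
      map_add' := fun p q => by rw [Submodule.coe_add, map_add, LinearMap.add_comp]
      map_smul' := fun h p => by
        rw [Submodule.coe_smul, smul_eq_mul, map_mul]
        rfl }
  have hsurj : Function.Surjective fX := by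
    intro q
    obtain ⟨u, hu, huι⟩ := hP
    obtain ⟨h, hh⟩ := hφ (q ∘ₗ πX)
    refine ⟨h • ⟨u, hu⟩, ?_⟩
    rw [map_smul]
    change φ h ∘ₗ (φ u ∘ₗ ιX) = q
    rw [huι, hh, LinearMap.comp_assoc, hπX, LinearMap.comp_id]
  obtain ⟨G, hG⟩ := Module.projective_lifting_property fX fY hsurj
  exact ⟨G, fun p => LinearMap.congr_fun hG p⟩

end Hereditary

section Auslander

variable {k : Type} [Field k] {L : Type} [Ring L] [Algebra k L] [FiniteDimensional k L]
  {nn : ℕ} {M : Fin nn → Type} [∀ i, AddCommGroup (M i)] [∀ i, Module L (M i)]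
  [∀ i, Module k (M i)] [∀ i, IsScalarTower k L (M i)]

/-- If the endomorphism algebra of `⨁ M_i` is a quotient of a finite-dimensional hereditary
algebra `H`, there is no cycle of nonzero non-isomorphisms between the `M_i`. A map `M_i → M_j` of
this kind induces an injection `P_j → P_i` of projective covers over `H`; if the latter is
bijective, then `M_i → M_j` is injective. Thus along a path the pair `(dim P_i, -dim M_i)`
decreases lexicographically. -/
lemma acyclic_of_hereditary (hfg : ∀ i, Module.Finite L (M i)) (hind : ∀ i, IsIndecModule L (M i))
    {H : Type} [Ring H] [Algebra k H] [FiniteDimensional k H]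
    (hher : ∀ (P : Type) [AddCommGroup P] [Module H P], Module.Projective H P →
          ∀ N : Submodule H P, Module.Projective H ↥N)
    (φ : H →+* Module.End L (∀ i, M i)) (hφ : Function.Surjective φ) (i : Fin nn) :
    ¬ Relation.TransGen (fun i j => ∃ g : M i →ₗ[L] M j, g ≠ 0 ∧ ¬ Function.Bijective g) i i := by
  have : ∀ i, FiniteDimensional k (M i) := fun i => Module.Finite.trans L (M i)
  have : IsArtinianRing L := IsArtinianRing.of_finite k L
  have : IsArtinianRing H := IsArtinianRing.of_finite k H
  have hπ : ∀ i, LinearMap.proj (φ := M) i ∘ₗ LinearMap.single L M i = LinearMap.id := fun i =>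
    LinearMap.ext fun x => by simp
  choose P hP u huP hu using fun i => exists_indec_cover hφ (hind i) (LinearMap.single L M i)
    (LinearMap.proj i) (hπ i)
  have hproj : ∀ i, Module.Projective H (P i) := fun i => hher H inferInstance (P i)
  let a : Fin nn → ℕ := fun i => Module.finrank k (P i)
  let d : Fin nn → ℕ := fun i => Module.finrank k (M i)
  have hstep : ∀ i j, (∃ g : M i →ₗ[L] M j, g ≠ 0 ∧ ¬ Function.Bijective g) →
      a j < a i ∨ (a j = a i ∧ d i < d j) := by
    rintro i j ⟨g, hg, hgb⟩
    obtain ⟨G, hG⟩ := exists_lift_precomp hφ _ _ (hπ i) (LinearMap.single L M j) (P i) (P j)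
      (hproj j) ⟨u i, huP i, hu i⟩ g
    have hG0 : G ≠ 0 := by
      rintro rfl
      have h1 := hG ⟨u j, huP j⟩
      rw [← LinearMap.comp_assoc, hu j] at h1
      apply hg
      ext x
      have h2 := LinearMap.congr_fun h1 x
      simpa using (congrFun h2 j).symm
    have hGinj : Function.Injective (G.restrictScalars k) :=
      injective_of_hereditary (hP j) (hher _ (hproj i)) G hG0
    rcases (LinearMap.finrank_le_finrank_of_injective hGinj).lt_or_eq with h | h
    · exact Or.inl h
    · refine Or.inr ⟨h, ?_⟩
      have hGsurj := (LinearMap.injective_iff_surjective_of_finrank_eq_finrank h).1 hGinj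
      obtain ⟨p, hp⟩ := hGsurj ⟨u i, huP i⟩
      have h1 := hG p
      rw [show G p = ⟨u i, huP i⟩ from hp, hu i] at h1
      have hginj : Function.Injective (g.restrictScalars k) := by
        intro x y hxy
        have hxy : g x = g y := hxy
        have h2 := LinearMap.congr_fun h1 x
        have h3 := LinearMap.congr_fun h1 y
        simp only [LinearMap.comp_apply, hxy] at h2 h3
        exact Pi.single_injective i (h2.trans h3.symm)
      refine lt_of_le_of_ne (LinearMap.finrank_le_finrank_of_injective hginj) fun h' => hgb ?_
      exact ⟨hginj, (LinearMap.injective_iff_surjective_of_finrank_eq_finrank h').1 hginj⟩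
  intro h
  have hmain : ∀ j, Relation.TransGen
      (fun i j => ∃ g : M i →ₗ[L] M j, g ≠ 0 ∧ ¬ Function.Bijective g) i j →
      a j < a i ∨ (a j = a i ∧ d i < d j) := by
    intro j hj
    induction hj with
    | single h => exact hstep _ _ h
    | tail _ h ih =>
      have := hstep _ _ h
      omega
  have := hmain i h
  omega

/-- In the directed situation nonzero endomorphisms of the `M_i` are bijective: an indecomposable
image `I` of a nonzero non-bijective endomorphism admits nonzero maps `M_i → I → M_i`, so it would
be isomorphic to `M_i`. -/
lemma bijective_of_directed (k : Type) [Field k] {L : Type} [Ring L] [Algebra k L]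
    [FiniteDimensional k L] {nn : ℕ} {M : Fin nn → Type} [∀ i, AddCommGroup (M i)]
    [∀ i, Module L (M i)] (hfg : ∀ i, Module.Finite L (M i))
    (hcomp : ∀ (X : Type) [AddCommGroup X] [Module L X], Module.Finite L X →
      IsIndecModule L X → ∃ i, Nonempty (X ≃ₗ[L] M i))
    (σ : Equiv.Perm (Fin nn)) (hσ : ∀ i j : Fin nn, (∃ g : M i →ₗ[L] M j, g ≠ 0) → σ i ≤ σ j)
    {i j : Fin nn} (hij : i = j) (g : M i →ₗ[L] M j) (hg : g ≠ 0) : Function.Bijective g := by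
  subst hij
  have : IsArtinianRing L := IsArtinianRing.of_finite k L
  by_contra hb
  have hr : LinearMap.range g ≠ ⊤ := fun h =>
    hb (IsNoetherian.bijective_of_surjective_endomorphism g (LinearMap.range_eq_top.1 h))
  obtain ⟨f, hf0, hft, hf⟩ := exists_indec_range g hg hr
  obtain ⟨j, ⟨e⟩⟩ := hcomp _ inferInstance hf
  have h1 : σ i ≤ σ j := hσ i j ⟨e.toLinearMap ∘ₗ f.rangeRestrict, fun h => hf0 <| by
    ext x
    have h2 : e (f.rangeRestrict x) = 0 := LinearMap.congr_fun h x
    exact congrArg Subtype.val ((LinearEquiv.map_eq_zero_iff e).1 h2)⟩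
  have h2 : σ j ≤ σ i := hσ j i ⟨(LinearMap.range f).subtype ∘ₗ e.symm.toLinearMap,
      fun h => hf0 <| by
    ext x
    have h2 := LinearMap.congr_fun h (e (f.rangeRestrict x))
    simpa using h2⟩
  obtain rfl : i = j := σ.injective (le_antisymm h1 h2)
  have h3 := IsArtinian.surjective_of_injective_endomorphism
    ((LinearMap.range f).subtype ∘ₗ e.symm.toLinearMap)
    (Subtype.val_injective.comp e.symm.injective)
  refine hft (eq_top_iff.2 fun x _ => ?_)
  obtain ⟨y, rfl⟩ := h3 x
  exact (e.symm y).2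

/-- Directedness makes the Auslander algebra a quotient of a finite-dimensional hereditary
algebra, the corners `End(M_i)` being `k` because `k` is algebraically closed. -/
lemma hereditary_of_directed [IsAlgClosed k] [∀ i, SMulCommClass L k (M i)]
    (hfg : ∀ i, Module.Finite L (M i)) (hind : ∀ i, IsIndecModule L (M i))
    (hcomp : ∀ (X : Type) [AddCommGroup X] [Module L X], Module.Finite L X →
      IsIndecModule L X → ∃ i, Nonempty (X ≃ₗ[L] M i))
    (σ : Equiv.Perm (Fin nn)) (hσ : ∀ i j : Fin nn, (∃ g : M i →ₗ[L] M j, g ≠ 0) → σ i ≤ σ j) :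
    ∃ (H : Type) (_ : Ring H) (_ : Algebra k H), FiniteDimensional k H ∧
        (∀ (P : Type) [AddCommGroup P] [Module H P], Module.Projective H P →
          ∀ N : Submodule H P, Module.Projective H ↥N) ∧
        ∃ φ : H →ₐ[k] (Module.End L (∀ i, M i)), Function.Surjective φ := by
  have : ∀ i, FiniteDimensional k (M i) := fun i => Module.Finite.trans L (M i)
  have hAfin : FiniteDimensional k (Module.End L (∀ i, M i)) :=
    FiniteDimensional.of_injective
      ({ toFun := fun f => f.restrictScalars k
         map_add' := fun _ _ => rfl
         map_smul' := fun _ _ => rfl } :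
        Module.End L (∀ i, M i) →ₗ[k] Module.End k (∀ i, M i))
      (LinearMap.restrictScalars_injective k)
  let f : Fin nn → Module.End L (∀ i, M i) := fun i =>
    LinearMap.single L M (σ.symm i) ∘ₗ LinearMap.proj (σ.symm i)
  have hf : CompleteOrthogonalIdempotents f :=
    { idem := fun i => LinearMap.ext fun x => by simp [f]
      ortho := fun i j hij => LinearMap.ext fun x => by
        have : σ.symm i ≠ σ.symm j := fun h => hij (σ.symm.injective h)
        simp [f, this]
      complete := LinearMap.ext fun x => by
        rw [LinearMap.sum_apply]
        rw [Equiv.sum_comp σ.symm (fun i => (LinearMap.single L M i ∘ₗ LinearMap.proj i) x)]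
        simp [Finset.univ_sum_single] }
  -- `f j * a * f i` is determined by the component `M_i → M_j` of `a`
  have hcorner : ∀ i j (a : Module.End L (∀ i, M i)), f j * a * f i =
      LinearMap.single L M (σ.symm j) ∘ₗ
        (LinearMap.proj (σ.symm j) ∘ₗ a ∘ₗ LinearMap.single L M (σ.symm i)) ∘ₗ
        LinearMap.proj (σ.symm i) := fun i j a => rfl
  refine exists_hereditary_cover k hf (fun i j hji a => ?_) fun i a => ?_
  · rw [hcorner]
    have h0 : LinearMap.proj (σ.symm j) ∘ₗ a ∘ₗ LinearMap.single L M (σ.symm i) = 0 := by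
      by_contra h
      have := hσ _ _ ⟨_, h⟩
      simp only [Equiv.apply_symm_apply] at this
      exact absurd hji (not_lt.2 this)
    rw [h0]
    simp
  · let b : Module.End L (M (σ.symm i)) :=
      LinearMap.proj (σ.symm i) ∘ₗ a ∘ₗ LinearMap.single L M (σ.symm i)
    have := (hind (σ.symm i)).1
    obtain ⟨c, hc⟩ := Module.End.exists_eigenvalue (b.restrictScalars k : Module.End k _)
    obtain ⟨v, hv⟩ := hc.exists_hasEigenvector
    have hv' : b v = c • v := hv.apply_eq_smul
    have hb : b - c • LinearMap.id = 0 := by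
      by_contra h
      have hbij := bijective_of_directed k hfg hcomp σ hσ rfl _ h
      exact hv.2 (hbij.1 (by simp [hv']))
    refine ⟨c, ?_⟩
    rw [hcorner]
    change _ ∘ₗ b ∘ₗ _ = _
    rw [sub_eq_zero.1 hb]
    refine LinearMap.ext fun x => ?_
    simp [f, Pi.single_smul]

end Auslander

end

/-- Let `Λ` be a finite-dimensional algebra of finite representation type
over an algebraically closed field, with `M_1, …, M_n` a complete set of representatives of the
indecomposable finitely generated modules, and let `A = End_Λ(M_1 ⊕ ⋯ ⊕ M_n)` be its Auslander
algebra. The following are equivalent: (1) `Λ` is representation-directed; (2) the indices can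
be reordered so that `Hom_Λ(M_i, M_j) ≠ 0` implies `i ≤ j`; (3) `A` is a quotient of a
finite-dimensional hereditary algebra. -/
theorem statement15
    (k : Type) [Field k] [IsAlgClosed k]
    (L : Type) [Ring L] [Algebra k L] [FiniteDimensional k L]
    {nn : ℕ} (M : Fin nn → Type)
    [∀ i, AddCommGroup (M i)] [∀ i, Module L (M i)]
    [∀ i, Module k (M i)] [∀ i, IsScalarTower k L (M i)] [∀ i, SMulCommClass L k (M i)]
    (hfg : ∀ i, Module.Finite L (M i)) (hind : ∀ i, IsIndecModule L (M i))
    (hsep : ∀ i j, Nonempty (M i ≃ₗ[L] M j) → i = j)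
    (hcomp : ∀ (X : Type) [AddCommGroup X] [Module L X], Module.Finite L X →
      IsIndecModule L X → ∃ i, Nonempty (X ≃ₗ[L] M i)) :
    ((¬ ∃ (t : ℕ) (_ : 1 ≤ t) (X : Fin (t + 1) → Type) (_ : ∀ s, AddCommGroup (X s))
        (_ : ∀ s, Module L (X s)),
      (∀ s, Module.Finite L (X s)) ∧ (∀ s, IsIndecModule L (X s)) ∧
      (∀ s : Fin t, ∃ g : X s.castSucc →ₗ[L] X s.succ, g ≠ 0 ∧ ¬ Function.Bijective g) ∧
      Nonempty (X 0 ≃ₗ[L] X (Fin.last t))) ↔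
      (∃ σ : Equiv.Perm (Fin nn), ∀ i j : Fin nn,
        (∃ g : M i →ₗ[L] M j, g ≠ 0) → σ i ≤ σ j)) ∧
    ((∃ σ : Equiv.Perm (Fin nn), ∀ i j : Fin nn,
        (∃ g : M i →ₗ[L] M j, g ≠ 0) → σ i ≤ σ j) ↔
      (∃ (H : Type) (_ : Ring H) (_ : Algebra k H), FiniteDimensional k H ∧
        (∀ (P : Type) [AddCommGroup P] [Module H P], Module.Projective H P →
          ∀ N : Submodule H P, Module.Projective H ↥N) ∧
        ∃ φ : H →ₐ[k] (Module.End L (∀ i, M i)), Function.Surjective φ)) := by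
  have hdir : (∀ i, ¬ Relation.TransGen
      (fun i j => ∃ g : M i →ₗ[L] M j, g ≠ 0 ∧ ¬ Function.Bijective g) i i) →
      ∃ σ : Equiv.Perm (Fin nn), ∀ i j : Fin nn, (∃ g : M i →ₗ[L] M j, g ≠ 0) → σ i ≤ σ j := by
    intro h
    obtain ⟨σ, hσ⟩ := exists_perm_of_acyclic _ h
    refine ⟨σ, fun i j ⟨g, hg⟩ => ?_⟩
    by_cases hb : Function.Bijective g
    · rw [hsep i j ⟨LinearEquiv.ofBijective g hb⟩]
    · exact hσ i j ⟨g, hg, hb⟩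
  refine ⟨⟨fun h => hdir fun i hi => h ?_, ?_⟩, ⟨?_, ?_⟩⟩
  · obtain ⟨t, f, ht, h0, hft, hf⟩ := exists_chain_of_transGen hi
    refine ⟨t, ht, fun s => M (f s), inferInstance, inferInstance, fun s => hfg _,
      fun s => hind _, fun s => hf s s.2, ?_⟩
    have h1 : f ((0 : Fin (t + 1)) : ℕ) = f (Fin.last t : ℕ) := by
      simp [h0, hft]
    change Nonempty (M (f ((0 : Fin (t + 1)) : ℕ)) ≃ₗ[L] M (f (Fin.last t : ℕ)))
    rw [h1]
    exact ⟨LinearEquiv.refl _ _⟩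
  · rintro ⟨σ, hσ⟩ ⟨t, ht, X, _, _, hXfg, hXind, hstep, ⟨e⟩⟩
    choose idx hidx using fun s => hcomp (X s) (hXfg s) (hXind s)
    let E : ∀ s, X s ≃ₗ[L] M (idx s) := fun s => (hidx s).some
    -- transport of the maps of the cycle to the representatives `M_i`
    have hconj : ∀ s : Fin t, ∃ g : M (idx s.castSucc) →ₗ[L] M (idx s.succ),
        g ≠ 0 ∧ ¬ Function.Bijective g := by
      intro s
      obtain ⟨g, hg, hgb⟩ := hstep s
      have hgE : ∀ x, (E s.succ).symm (((E s.succ).toLinearMap ∘ₗ g ∘ₗ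
          (E s.castSucc).symm.toLinearMap) (E s.castSucc x)) = g x := fun x => by simp
      refine ⟨(E s.succ).toLinearMap ∘ₗ g ∘ₗ (E s.castSucc).symm.toLinearMap,
        fun h => hg (LinearMap.ext fun x => ?_), fun h => hgb ?_⟩
      · rw [← hgE x, h]
        simp
      · have h1 := ((E s.succ).symm.bijective.comp h).comp (E s.castSucc).bijective
        exact (funext hgE : _ = (g : _ → _)) ▸ h1
    have hmono : Monotone fun s => σ (idx s) := Fin.monotone_iff_le_succ.2 fun s =>
      let ⟨g, hg, _⟩ := hconj s
      hσ _ _ ⟨g, hg⟩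
    have hends : idx 0 = idx (Fin.last t) :=
      hsep _ _ ⟨(E 0).symm.trans (e.trans (E (Fin.last t)))⟩
    let s₀ : Fin t := ⟨0, ht⟩
    have hs₀ : idx s₀.castSucc = idx s₀.succ := by
      apply σ.injective
      refine le_antisymm (hmono s₀.castSucc_lt_succ.le) ?_
      have h1 : σ (idx s₀.succ) ≤ σ (idx (Fin.last t)) := hmono (Fin.le_last _)
      rw [← hends] at h1
      exact h1
    obtain ⟨g, hg, hgb⟩ := hconj s₀
    exact hgb (bijective_of_directed k hfg hcomp σ hσ hs₀ g hg)
  · rintro ⟨σ, hσ⟩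
    exact hereditary_of_directed hfg hind hcomp σ hσ
  · rintro ⟨H, _, _, _, hher, φ, hφ⟩
    exact hdir (acyclic_of_hereditary (k := k) hfg hind hher φ.toRingHom hφ)
end

section
/- Suppose A is directed, i.e. e_j A e_i = 0 whenever j < i, and let M be a nonzero finitely generated left A-module. Call a subset S ⊆ {1,…,n} a generating set of M if M = A·(Σ_{i∈S} e_iM). Then there exists a generating set G of M that is contained in every generating set of M; in particular M has a unique minimal generating set. -/
/-!
Write `N(S) = A·(Σ_{j∈S} e_jM)` and let `G` be the set of those `i` with `e_iM ⊄ N({j | j < i})`.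

Strong induction on `i` gives `e_iM ⊆ N(G)` for all `i`: for `i ∉ G` one has
`e_iM ⊆ N({j | j < i}) ⊆ N(G)`. Since `1 = Σ e_i`, the set `G` generates `M`.

Conversely, directedness gives `e_i N(S) ⊆ N({j | j < i})` whenever `i ∉ S`
(`smul_mem_genSub_Iio`). If `S` generates `M` and `i ∉ S`, this says `e_iM ⊆ N({j | j < i})`,
so `i ∉ G`. Hence `G ⊆ S`.
-/

set_option linter.unusedVariables false
set_option maxHeartbeats 1000000

/-- The submodule `A·(Σ_{i∈S} e_iM)` of `M`. -/
def genSub (A : Type) [Ring A] {n : ℕ} (e : Fin n → A) (M : Type) [AddCommGroup M] [Module A M]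
    (S : Set (Fin n)) : Submodule A M :=
  Submodule.span A {m : M | ∃ i ∈ S, ∃ x : M, m = e i • x}

theorem genSub_le {A : Type} [Ring A] {n : ℕ} {e : Fin n → A} {M : Type} [AddCommGroup M]
    [Module A M] {S : Set (Fin n)} {N : Submodule A M} (h : ∀ i ∈ S, ∀ x : M, e i • x ∈ N) :
    genSub A e M S ≤ N :=
  Submodule.span_le.2 (by rintro m ⟨i, hi, x, rfl⟩; exact h i hi x)

theorem smul_mem_genSub {A : Type} [Ring A] {n : ℕ} (e : Fin n → A) {M : Type} [AddCommGroup M]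
    [Module A M] {S : Set (Fin n)} {i : Fin n} (hi : i ∈ S) (x : M) :
    e i • x ∈ genSub A e M S :=
  Submodule.subset_span ⟨i, hi, x, rfl⟩

/-- For directed `A`, the `e_i`-part of the submodule generated by the `e_jM`, `j ∈ S`, comes
only from indices `j ≤ i`; if `i ∉ S`, only from `j < i`. -/
theorem smul_mem_genSub_Iio {A : Type} [Ring A] {n : ℕ} {e : Fin n → A}
    (hdir : IsDirectedAlgebra A e) {M : Type} [AddCommGroup M] [Module A M]
    {S : Set (Fin n)} {i : Fin n} (hi : i ∉ S) {m : M} (hm : m ∈ genSub A e M S) :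
    e i • m ∈ genSub A e M (Set.Iio i) := by
  -- With the extra scalar `a`, the property passes from `m` to `b • m`, as span induction needs.
  suffices h : ∀ a : A, e i • a • m ∈ genSub A e M (Set.Iio i) by simpa using h 1
  unfold genSub at hm
  induction hm using Submodule.span_induction with
  | mem m hm =>
    obtain ⟨j, hj, x, rfl⟩ := hm
    intro a
    rcases lt_trichotomy j i with hlt | heq | hgt
    · exact Submodule.smul_mem _ _ (Submodule.smul_mem _ _ (smul_mem_genSub e hlt x))
    · exact absurd (heq ▸ hj) hi
    · rw [smul_smul, smul_smul, hdir j i hgt a, zero_smul]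
      exact Submodule.zero_mem _
  | zero => simp
  | add x y _ _ hx hy =>
    intro a
    rw [smul_add, smul_add]
    exact Submodule.add_mem _ (hx a) (hy a)
  | smul b x _ hx =>
    intro a
    rw [smul_smul a b x]
    exact hx (a * b)

/-- Let `A` be directed and `M` a nonzero finitely generated left `A`-module.
Call `S ⊆ {1,…,n}` a generating set of `M` if `M = A·(Σ_{i∈S} e_iM)`. Then `M` has a
generating set contained in every generating set, i.e. a unique minimal generating set. -/
theorem statement16
    (k : Type) [Field k] (A : Type) [Ring A] [Algebra k A] [FiniteDimensional k A]
    {n : ℕ} (e : Fin n → A)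
    (hidem : ∀ i, e i * e i = e i)
    (horth : ∀ i j, i ≠ j → e i * e j = 0)
    (hsum : ∑ i, e i = 1)
    (hdir : IsDirectedAlgebra A e)
    (M : Type) [AddCommGroup M] [Module A M] [Module.Finite A M] (hM : Nontrivial M) :
    ∃ G : Set (Fin n),
      (Submodule.span A {m : M | ∃ i ∈ G, ∃ x : M, m = e i • x} = ⊤) ∧
      ∀ S : Set (Fin n),
        Submodule.span A {m : M | ∃ i ∈ S, ∃ x : M, m = e i • x} = ⊤ → G ⊆ S := by
  change ∃ G : Set (Fin n), genSub A e M G = ⊤ ∧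
    ∀ S : Set (Fin n), genSub A e M S = ⊤ → G ⊆ S
  refine ⟨{i | ∃ x : M, e i • x ∉ genSub A e M (Set.Iio i)}, ?_, ?_⟩
  · set G : Set (Fin n) := {i | ∃ x : M, e i • x ∉ genSub A e M (Set.Iio i)} with hG
    have key : ∀ i : Fin n, ∀ x : M, e i • x ∈ genSub A e M G := by
      intro i
      induction i using WellFoundedLT.induction with
      | ind i ih =>
        intro x
        by_cases hi : i ∈ G
        · exact smul_mem_genSub e hi x
        · have hx : e i • x ∈ genSub A e M (Set.Iio i) := by
            by_contra hx
            exact hi ⟨x, hx⟩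
          exact genSub_le (fun j hj y => ih j hj y) hx
    refine eq_top_iff.2 fun x _ => ?_
    rw [← one_smul A x, ← hsum, Finset.sum_smul]
    exact Submodule.sum_mem _ fun i _ => key i x
  · rintro S hS i ⟨x, hx⟩
    by_contra hi
    exact hx (smul_mem_genSub_Iio hdir hi (hS ▸ Submodule.mem_top))
end
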